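/- arXiv:2502.13296 — 2 statements merged into one kernel-verified Lean document; each statement's English description precedes it below -/
import Mathlib

section
/- For every real λ with 0 < λ < 0.312, the state ρ̃(λ) on ℂ⁸⊗ℂ⁸ has SN(ρ̃(λ)) = 3 and is Bell-nonlocal, yet for all finite families of dichotomic POVMs {E_x, I − E_x} on ℂ⁸ (x ∈ X finite, 0 ≤ E_x ≤ I) and {F_y, I − F_y} on ℂ⁸ (y ∈ Y finite, 0 ≤ F_y ≤ I), there exist a finite set Λ, weights q_μ ≥ 0 with Σ_μ q_μ = 1, and conditional probability distributions P(a|x,μ), Q(b|y,μ) with a, b ∈ {0,1}, such that for all a, b, x, y, denoting E_x^0 = E_x, E_x^1 = I − E_x, F_y^0 = F_y, F_y^1 = I − F_y: Tr[(E_x^a ⊗ F_y^b) ρ̃(λ)] = λ Σ_μ q_μ P(a|x,μ) Q(b|y,μ) + (1−λ) ⟨φ₂⁺| (E_x^a ⊗ F_y^b) |φ₂⁺⟩; hence the correlations of ρ̃(λ) in any two-output Bell-nonlocal game, even with arbitrary POVMs, can be simulated using shared randomness and a Schmidt-rank-2 state. -/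
open Matrix
open scoped Kronecker ComplexOrder

/-- The Schmidt rank of a bipartite vector `ψ : m × n → ℂ`, i.e. the rank of the
matrix `C_ψ` with `(C_ψ)_{ij} = ψ (i, j)`. -/
noncomputable def schmidtRank {m n : Type*} [Fintype m] [Fintype n] (ψ : m × n → ℂ) : ℕ :=
  (Matrix.of fun i j => ψ (i, j)).rank

/-- A matrix `ρ` indexed by `m × n` has Schmidt number at most `r` if it can be written
as `∑_k ψ_k ψ_k†` with each `ψ_k` of Schmidt rank at most `r`. -/
def SchmidtNumberLE {m n : Type*} [Fintype m] [Fintype n]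
    (ρ : Matrix (m × n) (m × n) ℂ) (r : ℕ) : Prop :=
  ∃ (k : ℕ) (ψ : Fin k → m × n → ℂ),
    (∀ i, schmidtRank (ψ i) ≤ r) ∧
    ρ = ∑ i, Matrix.vecMulVec (ψ i) (star (ψ i))

/-- The Schmidt number: the least `r` such that `SchmidtNumberLE ρ r`. -/
noncomputable def schmidtNumber {m n : Type*} [Fintype m] [Fintype n]
    (ρ : Matrix (m × n) (m × n) ℂ) : ℕ :=
  sInf {r | SchmidtNumberLE ρ r}

/-- A density matrix: positive semidefinite with unit trace. -/
def IsDensityMatrix {n : Type*} [Fintype n] (ρ : Matrix n n ℂ) : Prop :=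
  ρ.PosSemidef ∧ ρ.trace = 1

/-- An effect: a Hermitian matrix `M` with `0 ≤ M ≤ I`. -/
def IsEffect {n : Type*} [Fintype n] [DecidableEq n] (M : Matrix n n ℂ) : Prop :=
  M.PosSemidef ∧ (1 - M).PosSemidef

/-- The maximally entangled unit vector `|Φ⁺_d⟩ = (1/√d) ∑ᵢ e_{(i,i)}`. -/
noncomputable def maxEnt (d : ℕ) : Fin d × Fin d → ℂ :=
  fun p => if p.1 = p.2 then ((1 / Real.sqrt d : ℝ) : ℂ) else 0

/-- The projector `P_d = |Φ⁺_d⟩⟨Φ⁺_d|`. -/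
noncomputable def projME (d : ℕ) : Matrix (Fin d × Fin d) (Fin d × Fin d) ℂ :=
  Matrix.vecMulVec (maxEnt d) (star (maxEnt d))

/-- The isotropic state `ρ^iso_d(p) = p P_d + (1−p) I/d²`. -/
noncomputable def isoState (d : ℕ) (p : ℝ) : Matrix (Fin d × Fin d) (Fin d × Fin d) ℂ :=
  (p : ℂ) • projME d + (((1 - p) / (d ^ 2 : ℝ) : ℝ) : ℂ) • 1

/-- `|φ₂⁺⟩ = (1/√2)(e_{(0,0)} + e_{(1,1)}) ∈ ℂ⁸⊗ℂ⁸`. -/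
noncomputable def phi2 : Fin 8 × Fin 8 → ℂ :=
  fun q => if q = (0, 0) ∨ q = (1, 1) then ((1 / Real.sqrt 2 : ℝ) : ℂ) else 0

/-- `ρ̃(λ) = λ ρ^iso₈(0.24) + (1−λ)|φ₂⁺⟩⟨φ₂⁺|`. -/
noncomputable def rhoTilde (l : ℝ) : Matrix (Fin 8 × Fin 8) (Fin 8 × Fin 8) ℂ :=
  (l : ℂ) • isoState 8 0.24 + ((1 - l : ℝ) : ℂ) • Matrix.vecMulVec phi2 (star phi2)

/-- A dichotomic (±1-valued) observable: Hermitian with `−I ≤ A ≤ I`. -/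
def IsDichotomicObservable {n : Type*} [Fintype n] [DecidableEq n]
    (A : Matrix n n ℂ) : Prop :=
  Aᴴ = A ∧ (1 - A).PosSemidef ∧ (1 + A).PosSemidef

/-!
Schmidt number. If `SN ρ ≤ r` then `d ⟨Φ⁺|ρ|Φ⁺⟩ ≤ r Tr ρ`, because `|Tr C|² ≤ rank C · ‖C‖²_F`; for
`ρ̃(λ)` the left side is `2 + 0.015 λ > 2`. Conversely, take `k` orthonormal columns of the `d × d`
Fourier matrix and let `G` be the projection onto their span. Every vector with entries
`G i j · ω^{t i - t j}` has Schmidt rank at most `k`, and averaging over the phases `t` and over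
permutations of the basis leaves the coherences of `P_d` plus a diagonal matrix, so an isotropic
state of small visibility is such an average plus a nonnegative diagonal.

Local model. The hidden variable is a standard complex Gaussian vector `z`. Alice rotates `z` to the
eigenbasis of her effect, selects the coordinate of largest modulus and outputs according to the
eigenvalue found there; Bob receives the state proportional to `z z†`. The mean of the largest
`|zᵢ|²` is the harmonic number `H_d`, which gives the isotropic correlations at visibility
`(H_d - 1) / (d - 1)`, at least `0.24` for `d = 8`. Only the second moments of `z` conditioned on
Alice's joint answers matter, so finitely many hidden values suffice.

Nonlocality. Real qubit observables on `span {e₀, e₁}`, extended by the identity, violate CHSH.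
-/

section PermutationInvariance

variable {ι : Type*}

lemma apply_eq_apply_of_perm_invariant {α : Type*} {K : ι → ι → α}
    (hK : ∀ (σ : Equiv.Perm ι) i j, K (σ i) (σ j) = K i j) {i j k l : ι}
    (hij : i ≠ j) (hkl : k ≠ l) : K i j = K k l := by
  classical
  have hk : Equiv.swap i k j ≠ k := by
    rw [Ne, Equiv.swap_apply_eq_iff, Equiv.swap_apply_right]
    exact hij.symm
  calc K i j = K k (Equiv.swap i k j) := by
        rw [← hK (Equiv.swap i k), Equiv.swap_apply_left]
    _ = K k l := by
        rw [← hK (Equiv.swap (Equiv.swap i k j) l), Equiv.swap_apply_left,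
          Equiv.swap_apply_of_ne_of_ne hk.symm hkl]

lemma apply_eq_ite_of_perm_invariant [Fintype ι] [DecidableEq ι] {K : ι → ι → ℝ}
    (hK : ∀ (σ : Equiv.Perm ι) i j, K (σ i) (σ j) = K i j) {T S : ℝ}
    (hT : ∑ i, K i i = T) (hS : ∑ i, ∑ j, K i j = S) (i j : ι) :
    K i j = if i = j then T / Fintype.card ι
      else (S - T) / (Fintype.card ι * (Fintype.card ι - 1)) := by
  have card_ne : (Fintype.card ι : ℝ) ≠ 0 := mod_cast (Fintype.card_pos_iff.mpr ⟨i⟩).ne'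
  have diag_eq (k l : ι) : K k k = K l l := by
    rw [← hK (Equiv.swap k l), Equiv.swap_apply_left]
  have card_mul_diag : Fintype.card ι * K i i = T := by
    simp [← hT, diag_eq _ i]
  split_ifs with hij
  · rw [← hij, eq_div_iff card_ne, mul_comm, card_mul_diag]
  have row_sum (k : ι) : ∑ l, K k l = K i i + (Fintype.card ι - 1) * K i j := by
    rw [← Finset.add_sum_erase _ _ (Finset.mem_univ k), diag_eq k i,
      Finset.sum_congr rfl fun l hl =>
        apply_eq_apply_of_perm_invariant hK (Finset.ne_of_mem_erase hl).symm hij]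
    simp [Finset.card_erase_of_mem, Nat.cast_sub (Fintype.card_pos_iff.mpr ⟨i⟩)]
  have one_lt_card : (1 : ℝ) < Fintype.card ι :=
    mod_cast Fintype.one_lt_card_iff.mpr ⟨i, j, hij⟩
  rw [eq_div_iff (mul_ne_zero card_ne (by linarith)), ← hS, ← card_mul_diag]
  simp only [row_sum, Finset.sum_const, Finset.card_univ, nsmul_eq_mul]
  ring

end PermutationInvariance

section SchmidtRank

variable {m n : Type*} [Fintype m] [Fintype n]

lemma schmidtRank_le_card_of_eq_sum {s : Type*} [Fintype s] {ψ : m × n → ℂ}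
    (A : m → s → ℂ) (B : n → s → ℂ) (hψ : ∀ i j, ψ (i, j) = ∑ k, A i k * B j k) :
    schmidtRank ψ ≤ Fintype.card s := by
  have factorization : (of fun i j => ψ (i, j)) = of A * (of B)ᵀ := by
    ext i j
    simp [mul_apply, hψ]
  rw [schmidtRank, factorization]
  exact (rank_mul_le_left _ _).trans (rank_le_card_width _)

lemma schmidtRank_single_le_one [DecidableEq m] [DecidableEq n] (q : m × n) :
    schmidtRank (Pi.single q (1 : ℂ)) ≤ 1 :=
  schmidtRank_le_card_of_eq_sum (s := Unit) (fun i _ => if i = q.1 then 1 else 0)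
    (fun j _ => if j = q.2 then 1 else 0) fun i j => by
      simp [Pi.single_apply, Prod.ext_iff, ← ite_and, and_comm]

lemma schmidtRank_smul_le (c : ℂ) (ψ : m × n → ℂ) : schmidtRank (c • ψ) ≤ schmidtRank ψ := by
  classical
  have factorization : (of fun i j => (c • ψ) (i, j)) =
      (c • 1 : Matrix m m ℂ) * of fun i j => ψ (i, j) := by
    ext i j
    simp
  rw [schmidtRank, factorization]
  exact rank_mul_le_right _ _

end SchmidtRank

namespace SchmidtNumberLE

variable {m n : Type*} [Fintype m] [Fintype n] {ρ σ : Matrix (m × n) (m × n) ℂ} {r s : ℕ}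

lemma of_vecMulVec {ψ : m × n → ℂ} (hψ : schmidtRank ψ ≤ r) :
    SchmidtNumberLE (vecMulVec ψ (star ψ)) r :=
  ⟨1, fun _ => ψ, fun _ => hψ, by simp⟩

lemma zero : SchmidtNumberLE (0 : Matrix (m × n) (m × n) ℂ) r :=
  ⟨0, Fin.elim0, Fin.rec0, by simp⟩

lemma mono (h : SchmidtNumberLE ρ r) (hrs : r ≤ s) : SchmidtNumberLE ρ s :=
  let ⟨k, ψ, hψ, hρ⟩ := h
  ⟨k, ψ, fun i => (hψ i).trans hrs, hρ⟩

lemma add (hρ : SchmidtNumberLE ρ r) (hσ : SchmidtNumberLE σ r) : SchmidtNumberLE (ρ + σ) r := by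
  obtain ⟨k, ψ, hψ, rfl⟩ := hρ
  obtain ⟨l, φ, hφ, rfl⟩ := hσ
  refine ⟨k + l, Fin.append ψ φ, Fin.addCases (by simpa using hψ) (by simpa using hφ), ?_⟩
  simp [Fin.sum_univ_add]

lemma sum {ι : Type*} (t : Finset ι) {ρ : ι → Matrix (m × n) (m × n) ℂ}
    (h : ∀ i ∈ t, SchmidtNumberLE (ρ i) r) : SchmidtNumberLE (∑ i ∈ t, ρ i) r :=
  Finset.sum_induction ρ (SchmidtNumberLE · r) (fun _ _ => add) zero h

lemma smul {c : ℝ} (hc : 0 ≤ c) (h : SchmidtNumberLE ρ r) : SchmidtNumberLE ((c : ℂ) • ρ) r := by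
  obtain ⟨k, ψ, hψ, rfl⟩ := h
  refine ⟨k, fun i => (√c : ℂ) • ψ i, fun i => (schmidtRank_smul_le _ _).trans (hψ i), ?_⟩
  have sqrt_mul_sqrt : (√c : ℂ) * (√c : ℂ) = c := mod_cast Real.mul_self_sqrt hc
  simp only [star_smul, smul_vecMulVec, vecMulVec_smul', op_smul_eq_smul,
    Finset.smul_sum, smul_smul, Complex.star_def, Complex.conj_ofReal, sqrt_mul_sqrt]

lemma diagonal [DecidableEq m] [DecidableEq n] {w : m × n → ℝ} (hw : ∀ q, 0 ≤ w q) :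
    SchmidtNumberLE (Matrix.diagonal fun q => (w q : ℂ)) 1 := by
  have decomposition : (Matrix.diagonal fun q => (w q : ℂ)) =
      ∑ q, (w q : ℂ) • vecMulVec (Pi.single q 1) (star (Pi.single q 1)) := by
    simp only [← sum_single_eq_diagonal, ← Pi.single_star, star_one,
      ← single_eq_single_vecMulVec_single, smul_single, smul_eq_mul, mul_one]
  rw [decomposition]
  exact sum _ fun q _ => (of_vecMulVec (schmidtRank_single_le_one q)).smul (hw q)

end SchmidtNumberLE

section LowerBound

variable {m n : Type*} [Fintype m] [Fintype n]

lemma exists_orthonormal_columns_factorization (C : Matrix m n ℂ) :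
    ∃ (B : Matrix m (Fin C.rank) ℂ) (A : Matrix (Fin C.rank) n ℂ), Bᴴ * B = 1 ∧ B * A = C := by
  let W : Submodule ℂ (EuclideanSpace ℂ m) :=
    (Submodule.span ℂ (Set.range C.col)).map (WithLp.linearEquiv 2 ℂ (m → ℂ)).symm.toLinearMap
  have finrank_W : Module.finrank ℂ W = C.rank := by
    rw [rank_eq_finrank_span_cols]
    exact LinearEquiv.finrank_map_eq _ _
  let b := (stdOrthonormalBasis ℂ W).reindex (finCongr finrank_W)
  let col (j : n) : W :=
    ⟨WithLp.toLp 2 (C.col j), Submodule.mem_map_of_mem (Submodule.subset_span ⟨j, rfl⟩)⟩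
  refine ⟨of fun i k => (b k : EuclideanSpace ℂ m) i, of fun k j => inner ℂ (b k) (col j), ?_, ?_⟩
  · ext k l
    rw [one_apply, ← orthonormal_iff_ite.mp b.orthonormal k l, Submodule.coe_inner,
      PiLp.inner_apply]
    simp [mul_apply, mul_comm]
  · ext i j
    have expansion := congrArg (fun w : W => (w : EuclideanSpace ℂ m) i) (b.sum_repr' (col j))
    simp only [Submodule.coe_sum, Submodule.coe_smul, WithLp.ofLp_sum, WithLp.ofLp_smul,
      Finset.sum_apply, Pi.smul_apply, smul_eq_mul] at expansion
    simp only [mul_apply, of_apply, mul_comm ((b _ : EuclideanSpace ℂ m) i), expansion]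
    rfl

lemma trace_conjTranspose_mul_self_eq_sum_norm_sq (C : Matrix m n ℂ) :
    (Cᴴ * C).trace = ((∑ i, ∑ j, ‖C i j‖ ^ 2 : ℝ) : ℂ) := by
  rw [Finset.sum_comm]
  simp [trace, mul_apply, Complex.conj_mul']

lemma norm_trace_mul_sq_le (B : Matrix m n ℂ) (A : Matrix n m ℂ) :
    ‖(B * A).trace‖ ^ 2 ≤ (∑ i, ∑ k, ‖B i k‖ ^ 2) * ∑ k, ∑ i, ‖A k i‖ ^ 2 := by
  have triangle : ‖(B * A).trace‖ ≤ ∑ q : m × n, ‖B q.1 q.2‖ * ‖A q.2 q.1‖ := by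
    simp only [trace, diag_apply, mul_apply, ← Fintype.sum_prod_type', ← norm_mul]
    exact norm_sum_le _ _
  calc ‖(B * A).trace‖ ^ 2 ≤ (∑ q : m × n, ‖B q.1 q.2‖ * ‖A q.2 q.1‖) ^ 2 := by gcongr
    _ ≤ (∑ q : m × n, ‖B q.1 q.2‖ ^ 2) * ∑ q : m × n, ‖A q.2 q.1‖ ^ 2 :=
      Finset.sum_mul_sq_le_sq_mul_sq _ _ _
    _ = _ := by rw [Fintype.sum_prod_type, Fintype.sum_prod_type_right]

lemma norm_trace_sq_le_rank_mul (C : Matrix m m ℂ) :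
    ‖C.trace‖ ^ 2 ≤ C.rank * ∑ i, ∑ j, ‖C i j‖ ^ 2 := by
  obtain ⟨B, A, isometry_B, factorization⟩ := exists_orthonormal_columns_factorization C
  have norm_sq_B : ∑ i, ∑ k, ‖B i k‖ ^ 2 = C.rank := by
    rw [← Complex.ofReal_inj, ← trace_conjTranspose_mul_self_eq_sum_norm_sq, isometry_B]
    simp
  have norm_sq_A : ∑ k, ∑ i, ‖A k i‖ ^ 2 = ∑ i, ∑ j, ‖C i j‖ ^ 2 := by
    have gram_eq : Aᴴ * A = Cᴴ * C := calc
      Aᴴ * A = Aᴴ * (Bᴴ * B) * A := by rw [isometry_B, Matrix.mul_one]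
      _ = (B * A)ᴴ * (B * A) := by simp only [conjTranspose_mul, Matrix.mul_assoc]
      _ = Cᴴ * C := by rw [factorization]
    rw [← Complex.ofReal_inj, ← trace_conjTranspose_mul_self_eq_sum_norm_sq, gram_eq,
      trace_conjTranspose_mul_self_eq_sum_norm_sq]
  calc ‖C.trace‖ ^ 2 = ‖(B * A).trace‖ ^ 2 := by rw [factorization]
    _ ≤ _ := norm_trace_mul_sq_le B A
    _ = _ := by rw [norm_sq_B, norm_sq_A]

lemma sum_sum_vecMulVec_star_diagonal (ψ : m × m → ℂ) :
    ∑ i, ∑ j, vecMulVec ψ (star ψ) (i, i) (j, j) = ((‖∑ i, ψ (i, i)‖ ^ 2 : ℝ) : ℂ) := by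
  simp [vecMulVec_apply, ← Finset.mul_sum, ← Finset.sum_mul, ← Complex.mul_conj']

lemma SchmidtNumberLE.re_sum_diagonal_le {ρ : Matrix (m × m) (m × m) ℂ} {r : ℕ}
    (h : SchmidtNumberLE ρ r) : (∑ i, ∑ j, ρ (i, i) (j, j)).re ≤ r * ρ.trace.re := by
  obtain ⟨k, ψ, hψ, rfl⟩ := h
  have trace_eq (s : Fin k) : (vecMulVec (ψ s) (star (ψ s))).trace =
      ((∑ i, ∑ j, ‖ψ s (i, j)‖ ^ 2 : ℝ) : ℂ) := by
    simp [trace, vecMulVec_apply, Fintype.sum_prod_type, Complex.mul_conj']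
  have sum_diagonal : ∑ i, ∑ j, (∑ s, vecMulVec (ψ s) (star (ψ s))) (i, i) (j, j) =
      ((∑ s, ‖∑ i, ψ s (i, i)‖ ^ 2 : ℝ) : ℂ) := by
    simp only [Complex.ofReal_sum, ← sum_sum_vecMulVec_star_diagonal, Matrix.sum_apply]
    exact Finset.sum_comm_cycle
  rw [sum_diagonal, trace_sum, Complex.ofReal_re, Complex.re_sum, Finset.mul_sum]
  refine Finset.sum_le_sum fun s _ => ?_
  rw [trace_eq, Complex.ofReal_re]
  refine (norm_trace_sq_le_rank_mul (of fun i j => ψ s (i, j))).trans ?_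
  exact mul_le_mul_of_nonneg_right (mod_cast hψ s) (by positivity)

end LowerBound

section PhaseTwist

variable {ι : Type*} [Fintype ι]

/-- The vector with matrix `G` conjugated by the diagonal unitary of cube roots of unity
`exp (2πi t / 3)`. -/
noncomputable def phaseTwist (G : Matrix ι ι ℂ) (t : ι → ZMod 3) : ι × ι → ℂ :=
  fun q => ZMod.stdAddChar (t q.1 - t q.2) * G q.1 q.2

lemma schmidtRank_phaseTwist_le {s : Type*} [Fintype s] (V : Matrix ι s ℂ) (t : ι → ZMod 3) :
    schmidtRank (phaseTwist (V * Vᴴ) t) ≤ Fintype.card s :=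
  schmidtRank_le_card_of_eq_sum (fun i m => ZMod.stdAddChar (t i) * V i m)
    (fun j m => ZMod.stdAddChar (-t j) * star (V j m)) fun i j => by
      simp only [phaseTwist, mul_apply, conjTranspose_apply, sub_eq_add_neg, AddChar.map_add_eq_mul,
        Finset.mul_sum]
      exact Finset.sum_congr rfl fun m _ => by ring

variable [DecidableEq ι]

lemma sum_stdAddChar_cross_ratio (i j k l : ι) :
    ∑ t : ι → ZMod 3, ZMod.stdAddChar (t i - t j - (t k - t l)) =
      if (i = j ∧ k = l) ∨ (i = k ∧ j = l) then (3 : ℂ) ^ Fintype.card ι else 0 := by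
  let ev (a : ι) : (ι → ZMod 3) →+ ZMod 3 := Pi.evalAddMonoidHom _ a
  let χ : AddChar (ι → ZMod 3) ℂ :=
    ZMod.stdAddChar.compAddMonoidHom (ev i - ev j - (ev k - ev l))
  have trivial_iff : χ = 0 ↔ (i = j ∧ k = l) ∨ (i = k ∧ j = l) := by
    constructor
    · intro trivial
      have combination_eq_zero (t : ι → ZMod 3) : t i - t j - (t k - t l) = 0 :=
        ZMod.injective_stdAddChar (by simpa [χ, ev] using DFunLike.congr_fun trivial t)
      have at_i := combination_eq_zero (Pi.single i 1)
      have at_l := combination_eq_zero (Pi.single l 1)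
      simp only [Pi.single_apply] at at_i at_l
      grind
    · rintro (⟨rfl, rfl⟩ | ⟨rfl, rfl⟩) <;> ext t <;> simp [χ, ev]
  have := AddChar.sum_eq_ite χ
  simp only [trivial_iff] at this
  simpa [χ, ev] using this

lemma sum_phaseTwist_mul_star (G : Matrix ι ι ℂ) (i j k l : ι) :
    ∑ t, phaseTwist G t (i, j) * star (phaseTwist G t (k, l)) =
      if (i = j ∧ k = l) ∨ (i = k ∧ j = l) then
        (3 : ℂ) ^ Fintype.card ι * (G i j * star (G k l)) else 0 := by
  have summand (t : ι → ZMod 3) : phaseTwist G t (i, j) * star (phaseTwist G t (k, l)) =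
      ZMod.stdAddChar (t i - t j - (t k - t l)) * (G i j * star (G k l)) := by
    rw [sub_eq_add_neg (t i - t j), AddChar.map_add_eq_mul, AddChar.map_neg_eq_conj]
    simp only [phaseTwist, star_mul', Complex.star_def]
    ring
  simp only [summand, ← Finset.sum_mul, sum_stdAddChar_cross_ratio, ite_mul, zero_mul]

lemma sum_perm_norm_sq_submatrix {G : Matrix ι ι ℂ} {g : ℝ} (hG : ∀ i, G i i = g) (i j : ι) :
    ∑ σ : Equiv.Perm ι, ‖G (σ i) (σ j)‖ ^ 2 = (Fintype.card ι).factorial * if i = j then g ^ 2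
      else (∑ k, ∑ l, ‖G k l‖ ^ 2 - Fintype.card ι * g ^ 2) /
        (Fintype.card ι * (Fintype.card ι - 1)) := by
  have card_ne : (Fintype.card ι : ℝ) ≠ 0 := mod_cast (Fintype.card_pos_iff.mpr ⟨i⟩).ne'
  rw [apply_eq_ite_of_perm_invariant
    (K := fun i j => ∑ σ : Equiv.Perm ι, ‖G (σ i) (σ j)‖ ^ 2)
    (T := (Fintype.card ι).factorial * (Fintype.card ι * g ^ 2))
    (S := (Fintype.card ι).factorial * ∑ k, ∑ l, ‖G k l‖ ^ 2)]
  · split_ifs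
    · field_simp
    · ring
  · exact fun τ i j => Equiv.sum_comp (Equiv.mulRight τ) fun σ => ‖G (σ i) (σ j)‖ ^ 2
  · simp only [hG, Complex.norm_real, Real.norm_eq_abs, sq_abs, Finset.sum_const, Finset.card_univ,
      Fintype.card_perm, nsmul_eq_mul]
    ring
  · have relabel (σ : Equiv.Perm ι) :
        ∑ k, ∑ l, ‖G (σ k) (σ l)‖ ^ 2 = ∑ k, ∑ l, ‖G k l‖ ^ 2 := by
      rw [← Equiv.sum_comp σ fun k => ∑ l, ‖G k l‖ ^ 2]
      exact Finset.sum_congr rfl fun k _ => Equiv.sum_comp σ fun l => ‖G (σ k) l‖ ^ 2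
    rw [Finset.sum_comm_cycle]
    simp [relabel, Fintype.card_perm]

/-- Averaging over relabellings makes all off-diagonal moduli equal; averaging over phases kills
every coherence except those of the maximally entangled vector. -/
lemma sum_phaseTwist_submatrix {G : Matrix ι ι ℂ} {g : ℝ} (hG : ∀ i, G i i = g) (i j k l : ι) :
    (∑ σ : Equiv.Perm ι, ∑ t, vecMulVec (phaseTwist (G.submatrix σ σ) t)
        (star (phaseTwist (G.submatrix σ σ) t))) (i, j) (k, l) =
      ((Fintype.card ι).factorial * 3 ^ Fintype.card ι : ℕ) *
        if i = j ∧ k = l then ((g ^ 2 : ℝ) : ℂ) else if i = k ∧ j = l then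
          (((∑ k, ∑ l, ‖G k l‖ ^ 2 - Fintype.card ι * g ^ 2) /
            (Fintype.card ι * (Fintype.card ι - 1)) : ℝ) : ℂ) else 0 := by
  simp only [Matrix.sum_apply, vecMulVec_apply, Pi.star_apply, sum_phaseTwist_mul_star,
    submatrix_apply]
  by_cases on_diagonal : i = j ∧ k = l
  · obtain ⟨rfl, rfl⟩ := on_diagonal
    simp only [and_self, true_or, ↓reduceIte, hG, RCLike.star_def, Complex.conj_ofReal,
      Finset.sum_const, Finset.card_univ, Fintype.card_perm, nsmul_eq_mul, Nat.cast_mul,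
      Nat.cast_pow, Nat.cast_ofNat, Complex.ofReal_pow]
    ring
  by_cases same : i = k ∧ j = l
  · obtain ⟨rfl, rfl⟩ := same
    have hij : i ≠ j := fun h => on_diagonal ⟨h, h⟩
    have average := congrArg (fun x : ℝ => (x : ℂ)) (sum_perm_norm_sq_submatrix hG i j)
    simp only [if_neg hij] at average
    simp only [hij, and_self, or_true, ↓reduceIte, RCLike.star_def, Complex.mul_conj',
      ← Finset.mul_sum, Nat.cast_mul, Nat.cast_pow, Nat.cast_ofNat, Complex.ofReal_div,
      Complex.ofReal_sub, Complex.ofReal_sum, Complex.ofReal_pow, Complex.ofReal_mul,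
      Complex.ofReal_natCast, Complex.ofReal_one]
    push_cast at average
    rw [average]
    ring
  · simp [on_diagonal, same]

end PhaseTwist

section FourierFrame

variable {d k : ℕ} [NeZero d]

/-- The first `k` columns of the unnormalised discrete Fourier matrix of order `d`. -/
noncomputable def fourierFrame (hkd : k ≤ d) : Matrix (Fin d) (Fin k) ℂ :=
  of fun i m => ZMod.stdAddChar (ZMod.finEquiv d i * ZMod.finEquiv d (Fin.castLE hkd m))

lemma fourierFrame_conjTranspose_mul_self (hkd : k ≤ d) :
    (fourierFrame hkd)ᴴ * fourierFrame hkd = (d : ℂ) • 1 := by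
  ext m l
  let e : Fin d ≃ ZMod d := (ZMod.finEquiv d).toEquiv
  have orthogonality : ∑ i, ZMod.stdAddChar (e i * (e (Fin.castLE hkd l) - e (Fin.castLE hkd m))) =
      if m = l then (d : ℂ) else 0 := by
    rw [e.sum_comp fun a => ZMod.stdAddChar (a * (e (Fin.castLE hkd l) - e (Fin.castLE hkd m))),
      AddChar.sum_mulShift _ (ZMod.isPrimitive_stdAddChar d)]
    simp [sub_eq_zero, eq_comm (a := m)]
  calc ((fourierFrame hkd)ᴴ * fourierFrame hkd) m l
      = ∑ i, ZMod.stdAddChar (e i * (e (Fin.castLE hkd l) - e (Fin.castLE hkd m))) := by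
        rw [mul_apply]
        refine Finset.sum_congr rfl fun i _ => ?_
        rw [mul_sub, sub_eq_neg_add, AddChar.map_add_eq_mul, AddChar.map_neg_eq_conj]
        rfl
    _ = ((d : ℂ) • (1 : Matrix (Fin k) (Fin k) ℂ)) m l := by
        rw [orthogonality]
        simp [one_apply]

lemma fourierFrame_mul_conjTranspose_apply_self (hkd : k ≤ d) (i : Fin d) :
    (fourierFrame hkd * (fourierFrame hkd)ᴴ) i i = k := by
  simp [mul_apply, fourierFrame, Complex.mul_conj']

lemma sum_norm_sq_fourierFrame_mul_conjTranspose (hkd : k ≤ d) :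
    ∑ i, ∑ j, ‖(fourierFrame hkd * (fourierFrame hkd)ᴴ) i j‖ ^ 2 = (d : ℝ) ^ 2 * k := by
  set V := fourierFrame hkd
  have trace_gram : (V * Vᴴ).trace = d * k := by
    simp [trace, V, fourierFrame_mul_conjTranspose_apply_self]
  have gram_sq : (V * Vᴴ)ᴴ * (V * Vᴴ) = (d : ℂ) • (V * Vᴴ) := by
    rw [conjTranspose_mul, conjTranspose_conjTranspose, Matrix.mul_assoc, ← Matrix.mul_assoc Vᴴ,
      fourierFrame_conjTranspose_mul_self, Matrix.smul_mul, Matrix.one_mul, Matrix.mul_smul]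
  rw [← Complex.ofReal_inj, ← trace_conjTranspose_mul_self_eq_sum_norm_sq, gram_sq, trace_smul,
    trace_gram]
  push_cast
  ring

end FourierFrame

lemma inv_sqrt_mul_inv_sqrt (d : ℕ) : ((√d : ℂ))⁻¹ * (√d : ℂ)⁻¹ = (d : ℂ)⁻¹ := by
  rw [← mul_inv, ← Complex.ofReal_mul, Real.mul_self_sqrt d.cast_nonneg, Complex.ofReal_natCast]

lemma isoState_apply (d : ℕ) (p : ℝ) (i j k l : Fin d) :
    isoState d p (i, j) (k, l) = (if i = j ∧ k = l then ((p / d : ℝ) : ℂ) else 0) +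
      if i = k ∧ j = l then (((1 - p) / d ^ 2 : ℝ) : ℂ) else 0 := by
  by_cases hij : i = j <;> by_cases hkl : k = l <;>
    simp [isoState, projME, maxEnt, vecMulVec_apply, one_apply, Prod.ext_iff, hij, hkl,
      inv_sqrt_mul_inv_sqrt, div_eq_mul_inv]

/-- The weight of `|ij⟩⟨ij|` left over in `isoState d p` after subtracting the multiple of the
averaged phase twists of `fourierFrame` that accounts for its coherences. -/
noncomputable def residualWeight (d k : ℕ) (p : ℝ) (q : Fin d × Fin d) : ℝ :=
  (1 - p) / d ^ 2 - if q.1 = q.2 then 0 else p * (d - k) / (k * d * (d - 1))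

lemma residualWeight_nonneg {d k : ℕ} {p : ℝ} (hd : 2 ≤ d) (hk : 0 < k) (hkd : k ≤ d)
    (hp : p * (d ^ 2 - k) ≤ k * (d - 1)) (q : Fin d × Fin d) : 0 ≤ residualWeight d k p q := by
  have two_le_d : (2 : ℝ) ≤ d := mod_cast hd
  have k_le_d : (k : ℝ) ≤ d := mod_cast hkd
  have d_sub_one_pos : (0 : ℝ) < d - 1 := by linarith
  unfold residualWeight
  split_ifs
  · have p_le_one : p ≤ 1 := by
      have d_sq_sub_k_pos : (0 : ℝ) < d ^ 2 - k := by nlinarith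
      exact le_of_mul_le_mul_right (hp.trans (by nlinarith)) d_sq_sub_k_pos
    rw [sub_zero]
    exact div_nonneg (by linarith) (by positivity)
  · rw [sub_nonneg, div_le_div_iff₀ (by positivity) (by positivity)]
    nlinarith

lemma isoState_eq_phaseTwist_average {d k : ℕ} [NeZero d] (hk : 0 < k) (hkd : k ≤ d) (p : ℝ) :
    isoState d p =
      ((p / (k ^ 2 * d * (d.factorial * 3 ^ d : ℕ)) : ℝ) : ℂ) •
        ∑ σ : Equiv.Perm (Fin d), ∑ t, vecMulVec
          (phaseTwist ((fourierFrame hkd * (fourierFrame hkd)ᴴ).submatrix σ σ) t)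
          (star (phaseTwist ((fourierFrame hkd * (fourierFrame hkd)ᴴ).submatrix σ σ) t)) +
      diagonal fun q => (residualWeight d k p q : ℂ) := by
  ext ⟨i, j⟩ ⟨l, m⟩
  rw [Matrix.add_apply, Matrix.smul_apply, sum_phaseTwist_submatrix (g := k)
    (by simp [fourierFrame_mul_conjTranspose_apply_self]),
    sum_norm_sq_fourierFrame_mul_conjTranspose, isoState_apply, diagonal_apply]
  have d_ne : (d : ℂ) ≠ 0 := mod_cast NeZero.ne d
  have k_ne : (k : ℂ) ≠ 0 := mod_cast hk.ne'
  have factorial_ne : (d.factorial : ℂ) ≠ 0 := mod_cast d.factorial_ne_zero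
  simp only [residualWeight, Fintype.card_fin, Prod.mk.injEq]
  by_cases on_diagonal : i = j ∧ l = m
  · obtain ⟨rfl, rfl⟩ := on_diagonal
    simp only [and_self, ↓reduceIte, Complex.ofReal_div, Complex.ofReal_natCast,
      Complex.ofReal_sub, Complex.ofReal_one, Complex.ofReal_pow, Nat.cast_mul, Nat.cast_pow,
      Nat.cast_ofNat, Complex.ofReal_mul, Complex.ofReal_ofNat, smul_eq_mul, sub_zero,
      add_left_inj]
    field_simp
  by_cases same : i = l ∧ j = m
  · obtain ⟨rfl, rfl⟩ := same
    have hij : i ≠ j := fun h => on_diagonal ⟨h, h⟩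
    have d_sub_one_ne : (d : ℂ) - 1 ≠ 0 := by
      have := Fin.val_ne_of_ne hij
      rw [sub_ne_zero]
      norm_cast
      lia
    simp only [hij, and_self, ↓reduceIte, Complex.ofReal_div, Complex.ofReal_sub,
      Complex.ofReal_one, Complex.ofReal_pow, Complex.ofReal_natCast, zero_add, Nat.cast_mul,
      Nat.cast_pow, Nat.cast_ofNat, Complex.ofReal_mul, Complex.ofReal_ofNat, smul_eq_mul]
    field_simp
    ring
  · simp [on_diagonal, same]

theorem schmidtNumberLE_isoState {d k : ℕ} {p : ℝ} (hd : 2 ≤ d) (hk : 0 < k) (hkd : k ≤ d)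
    (hp0 : 0 ≤ p) (hp : p * (d ^ 2 - k) ≤ k * (d - 1)) : SchmidtNumberLE (isoState d p) k := by
  have : NeZero d := ⟨by lia⟩
  have rank_twist (σ : Equiv.Perm (Fin d)) (t : Fin d → ZMod 3) : schmidtRank
      (phaseTwist ((fourierFrame hkd * (fourierFrame hkd)ᴴ).submatrix σ σ) t) ≤ k := by
    rw [submatrix_mul _ _ σ id σ Function.bijective_id]
    exact (schmidtRank_phaseTwist_le ((fourierFrame hkd).submatrix σ id) t).trans_eq
      (Fintype.card_fin k)
  rw [isoState_eq_phaseTwist_average hk hkd]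
  exact .add
    (.smul (by positivity) (.sum _ fun σ _ => .sum _ fun t _ => .of_vecMulVec (rank_twist σ t)))
    ((SchmidtNumberLE.diagonal (residualWeight_nonneg hd hk hkd hp)).mono hk)

section ComplexGaussian

open MeasureTheory Complex

/-- The standard complex Gaussian distribution, with density `π⁻¹ exp (-‖z‖²)`. -/
noncomputable def complexGaussian : Measure ℂ :=
  volume.withDensity fun z => ENNReal.ofReal (Real.pi⁻¹ * Real.exp (-‖z‖ ^ 2))

lemma integrable_mul_exp_neg_sq : Integrable fun y : ℝ => y * Real.exp (-y ^ 2) := by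
  simpa using integrable_mul_exp_neg_mul_sq one_pos

lemma integral_Ioi_mul_exp_neg_sq (r : ℝ) :
    ∫ y in Set.Ioi r, y * Real.exp (-y ^ 2) = Real.exp (-r ^ 2) / 2 := by
  have hderiv (y : ℝ) :
      HasDerivAt (fun y : ℝ => -(Real.exp (-y ^ 2) / 2)) (y * Real.exp (-y ^ 2)) y := by
    refine ((((hasDerivAt_pow 2 y).fun_neg.exp).div_const 2).fun_neg).congr_deriv ?_
    simp only [Nat.cast_ofNat, Nat.add_one_sub_one, pow_one, mul_neg]
    ring
  have htendsto : Filter.Tendsto (fun y : ℝ => -(Real.exp (-y ^ 2) / 2)) Filter.atTop (nhds 0) := by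
    have hsq : Filter.Tendsto (fun y : ℝ => -y ^ 2) Filter.atTop Filter.atBot :=
      Filter.tendsto_neg_atTop_atBot.comp (Filter.tendsto_pow_atTop two_ne_zero)
    simpa using ((Real.tendsto_exp_atBot.comp hsq).div_const 2).neg
  rw [integral_Ioi_of_hasDerivAt_of_tendsto' (fun y _ => hderiv y)
    integrable_mul_exp_neg_sq.integrableOn htendsto]
  ring

lemma complexGaussian_norm_gt {r : ℝ} (hr : 0 ≤ r) :
    complexGaussian {z | r < ‖z‖} = ENNReal.ofReal (Real.exp (-r ^ 2)) := by
  have hmeas : MeasurableSet {z : ℂ | r < ‖z‖} := measurableSet_lt measurable_const measurable_norm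
  set f : ℝ → ℝ := (Set.Ioi r).indicator fun y => Real.pi⁻¹ * Real.exp (-y ^ 2)
  have hf_nonneg (y : ℝ) : 0 ≤ f y := Set.indicator_nonneg (fun y _ => by positivity) y
  have hf_mul (y : ℝ) :
      y * f y = (Set.Ioi r).indicator (fun y => Real.pi⁻¹ * (y * Real.exp (-y ^ 2))) y := by
    simp only [f, Set.indicator_apply, mul_ite, mul_zero, mul_left_comm]
  have hf_integrable : Integrable fun z : ℂ => f ‖z‖ := by
    rw [integrable_fun_norm_addHaar volume, Complex.finrank_real_complex]
    simp only [Nat.add_one_sub_one, pow_one, smul_eq_mul, hf_mul]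
    exact ((integrable_mul_exp_neg_sq.const_mul _).indicator measurableSet_Ioi).integrableOn
  have hf_integral : ∫ z : ℂ, f ‖z‖ = Real.exp (-r ^ 2) := by
    rw [integral_fun_norm_addHaar volume f, Complex.finrank_real_complex]
    simp only [Nat.add_one_sub_one, pow_one, smul_eq_mul, hf_mul]
    rw [setIntegral_indicator measurableSet_Ioi,
      Set.inter_eq_self_of_subset_right (Set.Ioi_subset_Ioi hr), integral_const_mul,
      integral_Ioi_mul_exp_neg_sq, measureReal_def, Complex.volume_ball]
    have := Real.pi_ne_zero
    simp only [ENNReal.ofReal_one, one_pow, one_mul, ENNReal.coe_toReal, NNReal.coe_real_pi,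
      nsmul_eq_mul, Nat.cast_ofNat]
    field_simp
  rw [complexGaussian, withDensity_apply _ hmeas, ← lintegral_indicator hmeas, ← hf_integral,
    ofReal_integral_eq_lintegral_ofReal hf_integrable (.of_forall fun z => hf_nonneg _)]
  refine lintegral_congr fun z => ?_
  simp only [f, Set.indicator_apply, Set.mem_ofPred_eq, Set.mem_Ioi, apply_ite ENNReal.ofReal,
    ENNReal.ofReal_zero]

instance : IsProbabilityMeasure complexGaussian where
  measure_univ := by
    have hcompl : {z : ℂ | 0 < ‖z‖}ᶜ = {0} := by ext z; simp
    have hzero : complexGaussian {0} = 0 := withDensity_absolutelyContinuous _ _ (by simp)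
    have hmeas : MeasurableSet {z : ℂ | 0 < ‖z‖} :=
      measurableSet_lt measurable_const measurable_norm
    rw [← measure_add_measure_compl hmeas, complexGaussian_norm_gt le_rfl, hcompl, hzero]
    simp

lemma charFun_complexGaussian (t : ℂ) :
    charFun complexGaussian t = Complex.exp (-((‖t‖ : ℂ) ^ 2 / 4)) := by
  have hgauss := GaussianFourier.integral_cexp_neg_mul_sq_norm_add (b := 1) (by simp) I t
  have hexp (z : ℂ) : (Real.pi⁻¹ * Real.exp (-‖z‖ ^ 2)) • cexp (inner ℝ z t * I)
      = (Real.pi : ℂ)⁻¹ * cexp (-1 * ‖z‖ ^ 2 + I * inner ℝ t z) := by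
    rw [real_inner_comm, Complex.real_smul, ofReal_mul, mul_assoc, ofReal_exp, ← Complex.exp_add]
    push_cast
    ring_nf
  rw [charFun_apply, complexGaussian, integral_withDensity_eq_integral_toReal_smul (by fun_prop)
    (by simp)]
  have hpi : (Real.pi : ℂ) ≠ 0 := ofReal_ne_zero.mpr Real.pi_ne_zero
  simp only [ENNReal.toReal_ofReal (by positivity : 0 ≤ Real.pi⁻¹ * Real.exp _), hexp]
  rw [integral_const_mul, hgauss]
  simp [hpi, neg_div]

variable {ι : Type*} [Fintype ι]

/-- The law of a vector of independent standard complex Gaussians; its direction is a Haar-random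
pure state. -/
noncomputable def gaussianVector (ι : Type*) [Fintype ι] : Measure (ι → ℂ) :=
  Measure.pi fun _ => complexGaussian

instance : IsProbabilityMeasure (gaussianVector ι) := by
  unfold gaussianVector
  infer_instance

lemma charFun_gaussianVector (t : EuclideanSpace ℂ ι) :
    charFun ((gaussianVector ι).map (WithLp.toLp 2)) t
      = Complex.exp (-((‖t‖ : ℂ) ^ 2 / 4)) := by
  rw [gaussianVector, charFun_pi]
  simp only [charFun_complexGaussian, ← Complex.exp_sum]
  rw [← Complex.ofReal_pow, EuclideanSpace.norm_sq_eq]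
  simp [Finset.sum_div]

/-- The isometry of the Euclidean space `ℂ^ι` given by a unitary matrix, regarded as real-linear
because characteristic functions live on real inner product spaces. -/
noncomputable def unitaryIsometry [DecidableEq ι] (U : unitaryGroup ι ℂ) :
    EuclideanSpace ℂ ι ≃ₗᵢ[ℝ] EuclideanSpace ℂ ι :=
  let e : EuclideanSpace ℂ ι ≃ₗᵢ[ℂ] EuclideanSpace ℂ ι := Unitary.linearIsometryEquiv
    ⟨toEuclideanCLM (𝕜 := ℂ) (U : Matrix ι ι ℂ), Unitary.map_mem toEuclideanCLM U.2⟩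
  { e.toLinearEquiv.restrictScalars ℝ with norm_map' := e.norm_map }

lemma measurePreserving_mulVec_gaussianVector [DecidableEq ι] (U : unitaryGroup ι ℂ) :
    MeasurePreserving ((U : Matrix ι ι ℂ) *ᵥ ·) (gaussianVector ι) (gaussianVector ι) := by
  have hmeas : Measurable fun z : ι → ℂ => (U : Matrix ι ι ℂ) *ᵥ z := by fun_prop
  refine ⟨hmeas, (MeasurableEquiv.toLp 2 _).map_measurableEquiv_injective ?_⟩
  have hcomm : (WithLp.toLp 2 ∘ fun z : ι → ℂ => (U : Matrix ι ι ℂ) *ᵥ z)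
      = unitaryIsometry U ∘ WithLp.toLp 2 := rfl
  refine Measure.ext_of_charFun (E := EuclideanSpace ℂ ι) (funext fun t => ?_)
  rw [MeasurableEquiv.coe_toLp, Measure.map_map (by fun_prop) hmeas, hcomm,
    ← Measure.map_map (by fun_prop) (by fun_prop), charFun_apply,
    integral_map (by fun_prop) (by fun_prop)]
  simp only [LinearIsometryEquiv.inner_map_eq_flip]
  rw [← charFun_apply, charFun_gaussianVector, charFun_gaussianVector, LinearIsometryEquiv.norm_map]

end ComplexGaussian

section HarmonicTail

open MeasureTheory

lemma integrable_and_integral_eq_of_tail {Ω : Type*} [MeasurableSpace Ω] {μ : Measure Ω}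
    [IsFiniteMeasure μ] {f : Ω → ℝ} {g : ℝ → ℝ} (hf : Measurable f) (hf0 : ∀ ω, 0 ≤ f ω)
    (hg : IntegrableOn g (Set.Ioi 0)) (htail : ∀ t, 0 < t → μ.real {ω | t < f ω} = g t) :
    Integrable f μ ∧ ∫ ω, f ω ∂μ = ∫ t in Set.Ioi 0, g t := by
  have hg0 : 0 ≤ᵐ[volume.restrict (Set.Ioi 0)] g :=
    (ae_restrict_mem measurableSet_Ioi).mono fun t ht => htail t ht ▸ measureReal_nonneg
  have hlint : ∫⁻ ω, ENNReal.ofReal (f ω) ∂μ = ENNReal.ofReal (∫ t in Set.Ioi 0, g t) := by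
    rw [lintegral_eq_lintegral_meas_lt μ (.of_forall hf0) hf.aemeasurable,
      ofReal_integral_eq_lintegral_ofReal hg hg0]
    refine setLIntegral_congr_fun measurableSet_Ioi fun t ht => ?_
    rw [← htail t ht, ofReal_measureReal]
  refine ⟨⟨hf.aestronglyMeasurable, ?_⟩, ?_⟩
  · rw [hasFiniteIntegral_iff_ofReal (.of_forall hf0), hlint]
    exact ENNReal.ofReal_lt_top
  · rw [integral_eq_lintegral_of_nonneg_ae (.of_forall hf0) hf.aestronglyMeasurable, hlint,
      ENNReal.toReal_ofReal (integral_nonneg_of_ae hg0)]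

lemma integrableOn_and_integral_exp_neg_mul_one_sub_exp_neg_pow (k : ℕ) :
    IntegrableOn (fun t => Real.exp (-t) * (1 - Real.exp (-t)) ^ k) (Set.Ioi 0) ∧
      ∫ t in Set.Ioi 0, Real.exp (-t) * (1 - Real.exp (-t)) ^ k = ((k : ℝ) + 1)⁻¹ := by
  have hderiv (t : ℝ) : HasDerivAt (fun t => (1 - Real.exp (-t)) ^ (k + 1) / (k + 1))
      (Real.exp (-t) * (1 - Real.exp (-t)) ^ k) t := by
    have hk : (k : ℝ) + 1 ≠ 0 := by positivity
    refine (((((hasDerivAt_neg t).exp).const_sub 1).fun_pow (k + 1)).div_const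
      ((k : ℝ) + 1)).congr_deriv ?_
    simp only [Nat.add_one_sub_one, Nat.cast_add_one]
    field_simp
  have hnonneg (t : ℝ) (ht : t ∈ Set.Ioi (0 : ℝ)) :
      0 ≤ Real.exp (-t) * (1 - Real.exp (-t)) ^ k := by
    have : Real.exp (-t) ≤ 1 := Real.exp_le_one_iff.mpr (neg_nonpos.mpr (le_of_lt ht))
    have := sub_nonneg.mpr this
    positivity
  have htendsto : Filter.Tendsto (fun t : ℝ => (1 - Real.exp (-t)) ^ (k + 1) / (k + 1))
      Filter.atTop (nhds ((k : ℝ) + 1)⁻¹) := by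
    simpa using ((((Real.tendsto_exp_neg_atTop_nhds_zero).const_sub 1).pow (k + 1)).div_const
      ((k : ℝ) + 1))
  refine ⟨integrableOn_Ioi_deriv_of_nonneg' (fun t _ => hderiv t) hnonneg htendsto, ?_⟩
  rw [integral_Ioi_of_hasDerivAt_of_nonneg' (fun t _ => hderiv t) hnonneg htendsto]
  simp

lemma one_sub_one_sub_exp_neg_pow (n : ℕ) (t : ℝ) :
    1 - (1 - Real.exp (-t)) ^ n
      = ∑ k ∈ Finset.range n, Real.exp (-t) * (1 - Real.exp (-t)) ^ k := by
  rw [← Finset.mul_sum, ← mul_neg_geom_sum, sub_sub_cancel]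

lemma integrableOn_one_sub_one_sub_exp_neg_pow (n : ℕ) :
    IntegrableOn (fun t => 1 - (1 - Real.exp (-t)) ^ n) (Set.Ioi 0) := by
  simp only [one_sub_one_sub_exp_neg_pow]
  exact integrable_finsetSum _ fun k _ =>
    (integrableOn_and_integral_exp_neg_mul_one_sub_exp_neg_pow k).1

lemma integral_one_sub_one_sub_exp_neg_pow (n : ℕ) :
    ∫ t in Set.Ioi 0, (1 - (1 - Real.exp (-t)) ^ n) = harmonic n := by
  simp only [one_sub_one_sub_exp_neg_pow]
  rw [integral_finsetSum _ fun k _ =>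
    (integrableOn_and_integral_exp_neg_mul_one_sub_exp_neg_pow k).1]
  simp [integrableOn_and_integral_exp_neg_mul_one_sub_exp_neg_pow, harmonic]

variable {ι : Type*} [Fintype ι]

lemma gaussianVector_norm_sq_gt {t : ℝ} (ht : 0 ≤ t) :
    (gaussianVector ι).real {z | t < ‖z‖ ^ 2} = 1 - (1 - Real.exp (-t)) ^ Fintype.card ι := by
  have hmeas : MeasurableSet {w : ℂ | √t < ‖w‖} := measurableSet_lt measurable_const measurable_norm
  have hset : {z : ι → ℂ | t < ‖z‖ ^ 2} = (Set.univ.pi fun _ => {w : ℂ | √t < ‖w‖}ᶜ)ᶜ := by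
    ext z
    have hz : t < ‖z‖ ^ 2 ↔ ¬ ‖z‖ ≤ √t := by rw [Real.le_sqrt (norm_nonneg z) ht, not_le]
    simp [hz, pi_norm_le_iff_of_nonneg (Real.sqrt_nonneg t)]
  have hball : complexGaussian.real {w : ℂ | √t < ‖w‖}ᶜ = 1 - Real.exp (-t) := by
    rw [probReal_compl_eq_one_sub hmeas, measureReal_def,
      complexGaussian_norm_gt (Real.sqrt_nonneg t), Real.sq_sqrt ht,
      ENNReal.toReal_ofReal (Real.exp_pos _).le]
  rw [hset, probReal_compl_eq_one_sub (MeasurableSet.univ_pi fun _ => hmeas.compl),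
    gaussianVector, Measure.real, Measure.pi_pi, ENNReal.toReal_prod]
  simp only [← measureReal_def, hball, Finset.prod_const, Finset.card_univ]

lemma integrable_norm_sq_gaussianVector : Integrable (fun z => ‖z‖ ^ 2) (gaussianVector ι) :=
  (integrable_and_integral_eq_of_tail (by fun_prop) (fun _ => by positivity)
    (integrableOn_one_sub_one_sub_exp_neg_pow _) fun _ ht => gaussianVector_norm_sq_gt ht.le).1

lemma integral_norm_sq_gaussianVector :
    ∫ z, ‖z‖ ^ 2 ∂gaussianVector ι = harmonic (Fintype.card ι) := by
  rw [(integrable_and_integral_eq_of_tail (by fun_prop) (fun _ => by positivity)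
    (integrableOn_one_sub_one_sub_exp_neg_pow _) fun _ ht => gaussianVector_norm_sq_gt ht.le).2,
    integral_one_sub_one_sub_exp_neg_pow]

lemma integral_apply_norm_sq_gaussianVector (j : ι) : ∫ z, ‖z j‖ ^ 2 ∂gaussianVector ι = 1 := by
  have hmeas : AEStronglyMeasurable (fun w : ℂ => ‖w‖ ^ 2) complexGaussian := by fun_prop
  calc ∫ z, ‖z j‖ ^ 2 ∂gaussianVector ι
      = ∫ w, ‖w‖ ^ 2 ∂complexGaussian := integral_comp_eval (μ := fun _ => complexGaussian) hmeas
    _ = ∫ z, ‖z ()‖ ^ 2 ∂gaussianVector Unit :=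
        (integral_comp_eval (μ := fun _ => complexGaussian) hmeas).symm
    _ = ∫ z, ‖z‖ ^ 2 ∂gaussianVector Unit := by
        simp only [Pi.norm_def, Finset.univ_unique, Finset.sup_singleton, coe_nnnorm]
    _ = 1 := by simp [integral_norm_sq_gaussianVector, harmonic]

end HarmonicTail

section ArgmaxShare

open MeasureTheory

variable {ι : Type*} [Fintype ι]

/-- The share of coordinate `i` in the argmax of `j ↦ ‖z j‖`, ties being split evenly. The norm
`‖z‖` is the sup norm, so that `i` attains the maximum if and only if `‖z i‖ = ‖z‖`. -/
noncomputable def argmaxShare (i : ι) (z : ι → ℂ) : ℝ :=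
  (if ‖z i‖ = ‖z‖ then 1 else 0) / ∑ j, if ‖z j‖ = ‖z‖ then 1 else 0

lemma measurable_argmaxShare (i : ι) : Measurable (argmaxShare i) := by
  have hind (j : ι) : Measurable fun z : ι → ℂ => if ‖z j‖ = ‖z‖ then (1 : ℝ) else 0 :=
    Measurable.ite (measurableSet_eq_fun (by fun_prop) (by fun_prop)) measurable_const
      measurable_const
  exact (hind i).div (Finset.measurable_fun_sum _ fun j _ => hind j)

lemma argmaxShare_nonneg (i : ι) (z : ι → ℂ) : 0 ≤ argmaxShare i z := by
  unfold argmaxShare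
  positivity

lemma sum_argmaxShare [Nonempty ι] (z : ι → ℂ) : ∑ i, argmaxShare i z = 1 := by
  obtain ⟨i, hi⟩ := Finite.exists_max fun i => ‖z i‖
  have hmax : ‖z i‖ = ‖z‖ :=
    (norm_le_pi_norm z i).antisymm ((pi_norm_le_iff_of_nonneg (norm_nonneg _)).mpr hi)
  have hpos : 0 < ∑ j, if ‖z j‖ = ‖z‖ then (1 : ℝ) else 0 :=
    Finset.sum_pos' (fun j _ => by positivity) ⟨i, Finset.mem_univ i, by simp [hmax]⟩
  simp only [argmaxShare, ← Finset.sum_div, div_self hpos.ne']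

lemma argmaxShare_le_one [Nonempty ι] (i : ι) (z : ι → ℂ) : argmaxShare i z ≤ 1 :=
  sum_argmaxShare z ▸
    Finset.single_le_sum (fun j _ => argmaxShare_nonneg j z) (Finset.mem_univ i)

lemma sum_argmaxShare_mul_norm_sq [Nonempty ι] (z : ι → ℂ) :
    ∑ i, argmaxShare i z * ‖z i‖ ^ 2 = ‖z‖ ^ 2 := by
  have hterm (i : ι) : argmaxShare i z * ‖z i‖ ^ 2 = argmaxShare i z * ‖z‖ ^ 2 := by
    by_cases hi : ‖z i‖ = ‖z‖
    · rw [hi]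
    · simp [argmaxShare, hi]
  simp only [hterm, ← Finset.sum_mul, sum_argmaxShare, one_mul]

lemma argmaxShare_congr_norm (i : ι) {z w : ι → ℂ} (h : ∀ j, ‖z j‖ = ‖w j‖) :
    argmaxShare i z = argmaxShare i w := by
  have hsup : ‖z‖ = ‖w‖ := by
    rw [Pi.norm_def, Pi.norm_def]
    exact congrArg _ (Finset.sup_congr rfl fun j _ => NNReal.eq (h j))
  simp only [argmaxShare, h, hsup]

lemma argmaxShare_comp_perm (i : ι) (σ : Equiv.Perm ι) (z : ι → ℂ) :
    argmaxShare i (z ∘ σ) = argmaxShare (σ i) z := by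
  have hle (w : ι → ℂ) (τ : Equiv.Perm ι) : ‖w ∘ τ‖ ≤ ‖w‖ :=
    (pi_norm_le_iff_of_nonneg (norm_nonneg w)).mpr fun j => norm_le_pi_norm w (τ j)
  have hsup : ‖z ∘ σ‖ = ‖z‖ :=
    (hle z σ).antisymm (by simpa [Function.comp_assoc] using hle (z ∘ σ) σ.symm)
  simp only [argmaxShare, hsup, Function.comp_apply]
  rw [Equiv.sum_comp σ fun j => if ‖z j‖ = ‖z‖ then (1 : ℝ) else 0]

end ArgmaxShare

section SecondMoment

open MeasureTheory

variable {ι : Type*}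

/-- A measurable weight with values in `[0, 1]`, i.e. the probability of an outcome given the hidden
variable `z`. -/
structure IsUnitWeight (w : (ι → ℂ) → ℝ) : Prop where
  measurable : Measurable w
  nonneg : ∀ z, 0 ≤ w z
  le_one : ∀ z, w z ≤ 1

lemma IsUnitWeight.one : IsUnitWeight fun _ : ι → ℂ => (1 : ℝ) :=
  ⟨measurable_const, fun _ => zero_le_one, fun _ => le_rfl⟩

lemma IsUnitWeight.prod {X : Type*} [Fintype X] {w : X → (ι → ℂ) → ℝ}
    (hw : ∀ x, IsUnitWeight (w x)) : IsUnitWeight fun z => ∏ x, w x z :=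
  ⟨Finset.measurable_fun_prod _ fun x _ => (hw x).measurable,
    fun z => Finset.prod_nonneg fun x _ => (hw x).nonneg z,
    fun z => Finset.prod_le_one (fun x _ => (hw x).nonneg z) fun x _ => (hw x).le_one z⟩

variable [Fintype ι]

/-- The weighted second moment `𝔼[w(z) z z†]` of a complex Gaussian vector `z`. -/
noncomputable def secondMoment (w : (ι → ℂ) → ℝ) : Matrix ι ι ℂ :=
  of fun j k => ∫ z, (w z : ℂ) * (z j * star (z k)) ∂gaussianVector ι

lemma IsUnitWeight.argmaxShare [Nonempty ι] (i : ι) : IsUnitWeight (argmaxShare i) :=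
  ⟨measurable_argmaxShare i, argmaxShare_nonneg i, argmaxShare_le_one i⟩

lemma IsUnitWeight.comp_mulVec {w : (ι → ℂ) → ℝ} (hw : IsUnitWeight w) (U : Matrix ι ι ℂ) :
    IsUnitWeight fun z => w (U *ᵥ z) :=
  ⟨hw.measurable.comp (by fun_prop : Continuous fun z : ι → ℂ => U *ᵥ z).measurable,
    fun z => hw.nonneg _, fun z => hw.le_one _⟩

lemma IsUnitWeight.integrable {w : (ι → ℂ) → ℝ} (hw : IsUnitWeight w) (j k : ι) :
    Integrable (fun z => (w z : ℂ) * (z j * star (z k))) (gaussianVector ι) := by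
  have hmeas := hw.measurable
  refine integrable_norm_sq_gaussianVector.mono' (by fun_prop) (.of_forall fun z => ?_)
  calc ‖(w z : ℂ) * (z j * star (z k))‖ = w z * (‖z j‖ * ‖z k‖) := by
        rw [norm_mul, norm_mul, norm_star, Complex.norm_real, Real.norm_of_nonneg (hw.nonneg z)]
    _ ≤ 1 * (‖z‖ * ‖z‖) := by
        gcongr
        · exact hw.le_one z
        · exact norm_le_pi_norm z j
        · exact norm_le_pi_norm z k
    _ = ‖z‖ ^ 2 := by rw [one_mul, sq]

lemma IsUnitWeight.integrable_mul_norm_sq {w : (ι → ℂ) → ℝ} (hw : IsUnitWeight w) (j : ι) :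
    Integrable (fun z => w z * ‖z j‖ ^ 2) (gaussianVector ι) := by
  simpa [Complex.mul_conj', ← Complex.ofReal_pow, ← Complex.ofReal_mul]
    using (hw.integrable j j).re

lemma secondMoment_sum_mul {R : Type*} [Fintype R] {w : R → (ι → ℂ) → ℝ}
    (hw : ∀ r, IsUnitWeight (w r)) (c : R → ℝ) :
    secondMoment (fun z => ∑ r, c r * w r z) = ∑ r, (c r : ℂ) • secondMoment (w r) := by
  ext j k
  simp only [secondMoment, of_apply, Matrix.sum_apply, Matrix.smul_apply, smul_eq_mul,
    Complex.ofReal_sum, Complex.ofReal_mul, Finset.sum_mul, ← integral_const_mul, mul_assoc]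
  exact integral_finsetSum _ fun r _ => ((hw r).integrable j k).const_mul _

lemma dotProduct_secondMoment_mulVec {w : (ι → ℂ) → ℝ} (hw : IsUnitWeight w) (u v : ι → ℂ) :
    u ⬝ᵥ secondMoment w *ᵥ v
      = ∫ z, (w z : ℂ) * ((u ⬝ᵥ z) * (star z ⬝ᵥ v)) ∂gaussianVector ι := by
  have hint (j k : ι) : Integrable (fun z => u j * ((w z : ℂ) * (z j * star (z k)) * v k))
      (gaussianVector ι) := ((hw.integrable j k).mul_const _).const_mul _
  have hexpand (z : ι → ℂ) : (w z : ℂ) * ((u ⬝ᵥ z) * (star z ⬝ᵥ v))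
      = ∑ j, ∑ k, u j * ((w z : ℂ) * (z j * star (z k)) * v k) := by
    simp only [dotProduct, Pi.star_apply]
    rw [Finset.sum_mul_sum]
    simp only [Finset.mul_sum]
    exact Finset.sum_congr rfl fun j _ => Finset.sum_congr rfl fun k _ => by ring
  simp only [hexpand]
  rw [integral_finsetSum _ fun j _ => integrable_finsetSum _ fun k _ => hint j k]
  simp only [integral_finsetSum _ fun k _ => hint _ k, integral_const_mul, integral_mul_const,
    dotProduct, mulVec, secondMoment, of_apply, Finset.mul_sum]

lemma secondMoment_posSemidef {w : (ι → ℂ) → ℝ} (hw : IsUnitWeight w) :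
    (secondMoment w).PosSemidef := by
  refine .of_dotProduct_mulVec_nonneg ?_ fun v => ?_
  · ext j k
    simp only [secondMoment, conjTranspose_apply, of_apply, Complex.star_def, ← integral_conj,
      map_mul, Complex.conj_ofReal, Complex.conj_conj, mul_comm]
  · have hsq (z : ι → ℂ) : (w z : ℂ) * ((star v ⬝ᵥ z) * (star z ⬝ᵥ v))
        = ((w z * ‖star v ⬝ᵥ z‖ ^ 2 : ℝ) : ℂ) := by
      have hstar : star z ⬝ᵥ v = star (star v ⬝ᵥ z) := by
        rw [star_dotProduct]
      rw [hstar, Complex.star_def, Complex.mul_conj']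
      push_cast
      rfl
    simp only [dotProduct_secondMoment_mulVec hw, hsq, integral_complex_ofReal]
    exact Complex.zero_le_real.mpr
      (integral_nonneg fun z => mul_nonneg (hw.nonneg z) (sq_nonneg _))

variable [DecidableEq ι]

lemma secondMoment_comp_conjTranspose_mulVec {w : (ι → ℂ) → ℝ} (hw : IsUnitWeight w)
    (U : unitaryGroup ι ℂ) :
    secondMoment (fun z => w ((U : Matrix ι ι ℂ)ᴴ *ᵥ z))
      = U * secondMoment w * (U : Matrix ι ι ℂ)ᴴ := by
  let V := (U : Matrix ι ι ℂ)
  have hVV : Vᴴ * V = 1 := mem_unitaryGroup_iff'.mp U.2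
  ext j k
  calc secondMoment (fun z => w (Vᴴ *ᵥ z)) j k
      = ∫ z, (w (Vᴴ *ᵥ (V *ᵥ z)) : ℂ) * ((V *ᵥ z) j * star ((V *ᵥ z) k)) ∂gaussianVector ι := by
        have hmp := measurePreserving_mulVec_gaussianVector U
        have hmeas := ((hw.comp_mulVec Vᴴ).integrable j k).aestronglyMeasurable
        rw [← hmp.map_eq] at hmeas
        rw [← integral_map hmp.measurable.aemeasurable hmeas, hmp.map_eq, secondMoment, of_apply]
    _ = V j ⬝ᵥ secondMoment w *ᵥ star (V k) := by
        rw [dotProduct_secondMoment_mulVec hw]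
        simp only [mulVec_mulVec, hVV, one_mulVec, ← star_dotProduct_star, mulVec]
    _ = (V * secondMoment w * Vᴴ) j k := by
        rw [Matrix.mul_assoc]
        rfl

/-- Flipping the sign of one coordinate preserves the weight and the Gaussian measure, which kills
the off-diagonal entries. -/
lemma secondMoment_eq_diagonal {w : (ι → ℂ) → ℝ} (hw : IsUnitWeight w)
    (hw_norm : ∀ z z', (∀ j, ‖z j‖ = ‖z' j‖) → w z = w z') :
    secondMoment w
      = diagonal fun j => ((∫ z, w z * ‖z j‖ ^ 2 ∂gaussianVector ι : ℝ) : ℂ) := by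
  ext j k
  rcases eq_or_ne j k with rfl | hjk
  · simp only [secondMoment, of_apply, diagonal_apply_eq, ← integral_complex_ofReal,
      Complex.star_def, Complex.mul_conj', Complex.ofReal_mul, Complex.ofReal_pow]
  · let flip : Matrix ι ι ℂ := diagonal fun i => if i = j then -1 else 1
    have hflip : flipᴴ = flip := by
      rw [diagonal_conjTranspose]
      congr 1
      ext i
      by_cases hi : i = j <;> simp [hi]
    have hunit : flip ∈ unitaryGroup ι ℂ := by
      rw [mem_unitaryGroup_iff', star_eq_conjTranspose, hflip, diagonal_mul_diagonal,
        ← diagonal_one]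
      congr 1
      ext i
      split_ifs <;> simp
    have hw_flip : (fun z => w (flipᴴ *ᵥ z)) = w := by
      ext z
      refine hw_norm _ _ fun i => ?_
      rw [hflip, mulVec_diagonal]
      split_ifs <;> simp
    have hconj := secondMoment_comp_conjTranspose_mulVec hw ⟨flip, hunit⟩
    rw [hw_flip, hflip] at hconj
    have hneg : secondMoment w j k = -secondMoment w j k := by
      nth_rw 1 [hconj]
      simp [flip, diagonal_mul, mul_diagonal, hjk.symm]
    rw [diagonal_apply_ne _ hjk, self_eq_neg.mp hneg]

lemma secondMoment_one : secondMoment (fun _ : ι → ℂ => 1) = 1 := by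
  rw [secondMoment_eq_diagonal .one fun _ _ _ => rfl]
  simp [integral_apply_norm_sq_gaussianVector]

end SecondMoment

section ArgmaxMoment

open MeasureTheory

variable {ι : Type*} [Fintype ι]

lemma integral_argmaxShare_mul_norm_sq_perm (σ : Equiv.Perm ι) (i j : ι) :
    ∫ z, argmaxShare (σ i) z * ‖z (σ j)‖ ^ 2 ∂gaussianVector ι
      = ∫ z, argmaxShare i z * ‖z j‖ ^ 2 ∂gaussianVector ι := by
  have hmp : MeasurePreserving (MeasurableEquiv.piCongrLeft (fun _ : ι => ℂ) σ)
      (gaussianVector ι) (gaussianVector ι) :=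
    measurePreserving_piCongrLeft (fun _ => complexGaussian) σ
  rw [← hmp.integral_comp' fun z => argmaxShare (σ i) z * ‖z (σ j)‖ ^ 2]
  have happly (z : ι → ℂ) (k : ι) :
      MeasurableEquiv.piCongrLeft (fun _ : ι => ℂ) σ z (σ k) = z k :=
    Equiv.piCongrLeft_apply_apply (fun _ => ℂ) σ z k
  have hcomp (z : ι → ℂ) : MeasurableEquiv.piCongrLeft (fun _ : ι => ℂ) σ z ∘ σ = z :=
    funext (happly z)
  simp only [← argmaxShare_comp_perm, hcomp, happly]

lemma sum_integral_argmaxShare_mul_norm_sq_self [Nonempty ι] :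
    ∑ i, ∫ z, argmaxShare i z * ‖z i‖ ^ 2 ∂gaussianVector ι = harmonic (Fintype.card ι) := by
  rw [← integral_finsetSum _ fun i _ => (IsUnitWeight.argmaxShare i).integrable_mul_norm_sq i]
  simp only [sum_argmaxShare_mul_norm_sq, integral_norm_sq_gaussianVector]

lemma sum_sum_integral_argmaxShare_mul_norm_sq [Nonempty ι] :
    ∑ i, ∑ j, ∫ z, argmaxShare i z * ‖z j‖ ^ 2 ∂gaussianVector ι = Fintype.card ι := by
  rw [Finset.sum_comm]
  simp only [← integral_finsetSum Finset.univ fun i _ =>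
    (IsUnitWeight.argmaxShare i).integrable_mul_norm_sq _, ← Finset.sum_mul, sum_argmaxShare,
    one_mul, integral_apply_norm_sq_gaussianVector]
  simp

/-- The largest visibility `(H_d - 1) / (d - 1)` of the isotropic state for which the argmax
response reproduces projective measurements, `H_d` being the harmonic number. -/
noncomputable def argmaxVisibility (d : ℕ) : ℝ := (harmonic d - 1) / (d - 1)

lemma secondMoment_argmaxShare [DecidableEq ι] [Nontrivial ι] (i : ι) :
    secondMoment (argmaxShare i)
      = (argmaxVisibility (Fintype.card ι) : ℂ) • single i i 1
        + (((1 - argmaxVisibility (Fintype.card ι)) / Fintype.card ι : ℝ) : ℂ) • 1 := by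
  have hcard : (1 : ℝ) < Fintype.card ι := mod_cast Fintype.one_lt_card
  have hcard0 : (Fintype.card ι : ℝ) ≠ 0 := by linarith
  have hcard1 : (Fintype.card ι : ℝ) - 1 ≠ 0 := by linarith
  rw [secondMoment_eq_diagonal (.argmaxShare i) fun z z' => argmaxShare_congr_norm i,
    ← diagonal_single, ← diagonal_one, ← diagonal_smul, ← diagonal_smul, diagonal_add]
  congr 1
  ext j
  rw [apply_eq_ite_of_perm_invariant integral_argmaxShare_mul_norm_sq_perm
    sum_integral_argmaxShare_mul_norm_sq_self sum_sum_integral_argmaxShare_mul_norm_sq]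
  rcases eq_or_ne i j with rfl | hij
  · simp only [if_true, Pi.smul_apply, Pi.single_eq_same, smul_eq_mul, mul_one,
      ← Complex.ofReal_add, argmaxVisibility]
    congr 1
    field_simp
    ring
  · simp only [hij, if_false, Pi.smul_apply, Pi.single_eq_of_ne hij.symm, smul_eq_mul, mul_zero,
      zero_add, mul_one, argmaxVisibility]
    congr 1
    field_simp
    ring

variable {X : Type*} [Fintype X] [DecidableEq ι]

/-- The probability that independent argmax responses in the orthonormal bases `U x` to the hidden
vector `z` return the outcomes `r x`. -/
noncomputable def jointShare (U : X → unitaryGroup ι ℂ) (r : X → ι) (z : ι → ℂ) : ℝ :=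
  ∏ x, argmaxShare (r x) ((U x : Matrix ι ι ℂ)ᴴ *ᵥ z)

lemma IsUnitWeight.jointShare [Nonempty ι] (U : X → unitaryGroup ι ℂ) (r : X → ι) :
    IsUnitWeight (jointShare U r) :=
  .prod fun x => (IsUnitWeight.argmaxShare (r x)).comp_mulVec _

variable [DecidableEq X]

lemma sum_jointShare [Nonempty ι] (U : X → unitaryGroup ι ℂ) (z : ι → ℂ) :
    ∑ r, jointShare U r z = 1 := by
  simp only [jointShare]
  rw [← Fintype.prod_sum fun x i => argmaxShare i ((U x : Matrix ι ι ℂ)ᴴ *ᵥ z)]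
  simp only [sum_argmaxShare, Finset.prod_const_one]

lemma sum_mul_jointShare [Nonempty ι] (U : X → unitaryGroup ι ℂ) (x : X) (c : ι → ℝ)
    (z : ι → ℂ) :
    ∑ r, c (r x) * jointShare U r z
      = ∑ i, c i * argmaxShare i ((U x : Matrix ι ι ℂ)ᴴ *ᵥ z) := by
  have hfactor (r : X → ι) : c (r x) * jointShare U r z
      = ∏ y, (if y = x then c (r y) else 1) * argmaxShare (r y) ((U y : Matrix ι ι ℂ)ᴴ *ᵥ z) := by
    simp only [Finset.prod_mul_distrib, Finset.prod_ite_eq', Finset.mem_univ, if_true, jointShare]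
  simp only [hfactor]
  rw [← Fintype.prod_sum fun y i =>
    (if y = x then c i else 1) * argmaxShare i ((U y : Matrix ι ι ℂ)ᴴ *ᵥ z),
    Fintype.prod_eq_single x fun y hy => by simp [hy, sum_argmaxShare]]
  simp

lemma sum_secondMoment_jointShare [Nonempty ι] (U : X → unitaryGroup ι ℂ) :
    ∑ r, secondMoment (jointShare U r) = 1 := by
  have hsum := secondMoment_sum_mul (IsUnitWeight.jointShare U) fun _ => 1
  simpa [sum_jointShare, secondMoment_one] using hsum.symm

lemma sum_smul_secondMoment_jointShare [Nontrivial ι] (U : X → unitaryGroup ι ℂ) (x : X)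
    (c : ι → ℝ) :
    ∑ r, (c (r x) : ℂ) • secondMoment (jointShare U r)
      = (argmaxVisibility (Fintype.card ι) : ℂ) •
          ((U x : Matrix ι ι ℂ) * diagonal (fun i => (c i : ℂ)) * (U x : Matrix ι ι ℂ)ᴴ)
        + (((1 - argmaxVisibility (Fintype.card ι)) / Fintype.card ι * ∑ i, c i : ℝ) : ℂ) • 1 := by
  have hUU : (U x : Matrix ι ι ℂ) * (U x : Matrix ι ι ℂ)ᴴ = 1 := mem_unitaryGroup_iff.mp (U x).2
  have hdiag : diagonal (fun i => (c i : ℂ)) = ∑ i, (c i : ℂ) • single i i (1 : ℂ) := by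
    simp [Matrix.smul_single, Matrix.sum_single_eq_diagonal]
  rw [← secondMoment_sum_mul (IsUnitWeight.jointShare U) fun r => c (r x)]
  simp only [sum_mul_jointShare]
  rw [secondMoment_sum_mul fun i => (IsUnitWeight.argmaxShare i).comp_mulVec _]
  simp only [secondMoment_comp_conjTranspose_mulVec (.argmaxShare _), secondMoment_argmaxShare,
    hdiag, mul_add, add_mul, Matrix.mul_sum, Matrix.mul_smul, Matrix.smul_mul,
    mul_one, hUU, smul_add, Finset.sum_add_distrib, Finset.smul_sum, smul_smul, ← Finset.sum_smul,
    mul_comm, Complex.ofReal_mul, Complex.ofReal_sum, Finset.sum_mul]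

end ArgmaxMoment

section LocalModel

variable {A B X Y Λ n : Type*}

/-- The conditional distribution `p a b x y` of outcomes `a`, `b` given inputs `x`, `y` has a local
hidden variable model with finitely many hidden values. It is complex valued because it is
typically given as a trace. -/
def IsLocalCorrelation [Fintype A] [Fintype B] (p : A → B → X → Y → ℂ) : Prop :=
  ∃ (nΛ : ℕ) (q : Fin nΛ → ℝ) (P : A → X → Fin nΛ → ℝ) (Q : B → Y → Fin nΛ → ℝ),
    (∀ μ, 0 ≤ q μ) ∧ (∑ μ, q μ = 1) ∧
    (∀ a x μ, 0 ≤ P a x μ) ∧ (∀ x μ, ∑ a, P a x μ = 1) ∧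
    (∀ b y μ, 0 ≤ Q b y μ) ∧ (∀ y μ, ∑ b, Q b y μ = 1) ∧
    ∀ a b x y, p a b x y = ((∑ μ, q μ * P a x μ * Q b y μ : ℝ) : ℂ)

/-- A family of nonnegative functions of `a` summing to one, i.e. a distribution of the outcome `a`
for each input `x` and hidden value `μ`. -/
structure IsResponse [Fintype A] (P : A → X → Λ → ℝ) : Prop where
  nonneg : ∀ a x μ, 0 ≤ P a x μ
  sum_eq_one : ∀ x μ, ∑ a, P a x μ = 1

lemma IsLocalCorrelation.of_fintype [Fintype A] [Fintype B] [Fintype Λ] {q : Λ → ℝ}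
    {P : A → X → Λ → ℝ} {Q : B → Y → Λ → ℝ} (hq : ∀ μ, 0 ≤ q μ) (hq1 : ∑ μ, q μ = 1)
    (hP : IsResponse P) (hQ : IsResponse Q) :
    IsLocalCorrelation fun a b x y => ((∑ μ, q μ * P a x μ * Q b y μ : ℝ) : ℂ) := by
  let e := (Fintype.equivFin Λ).symm
  refine ⟨Fintype.card Λ, q ∘ e, fun a x => P a x ∘ e, fun b y => Q b y ∘ e, fun μ => hq (e μ),
    (e.sum_comp q).trans hq1, fun a x μ => hP.nonneg a x (e μ), fun x μ => hP.sum_eq_one x (e μ),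
    fun b y μ => hQ.nonneg b y (e μ), fun y μ => hQ.sum_eq_one y (e μ), fun a b x y => ?_⟩
  exact congrArg _ (e.sum_comp fun μ => q μ * P a x μ * Q b y μ).symm

variable [Fintype n]

lemma trace_mul_vecMulVec_star (M : Matrix n n ℂ) (φ : n → ℂ) :
    (M * vecMulVec φ (star φ)).trace = star φ ⬝ᵥ M *ᵥ φ := by
  rw [mul_vecMulVec, trace_vecMulVec, dotProduct_comm]

lemma trace_mul_nonneg_of_posSemidef {M N : Matrix n n ℂ} (hM : M.PosSemidef)
    (hN : N.PosSemidef) : 0 ≤ (M * N).trace := by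
  obtain ⟨m, φ, rfl⟩ := posSemidef_iff_eq_sum_vecMulVec.mp hN
  rw [Matrix.mul_sum, trace_sum]
  exact Finset.sum_nonneg fun k _ =>
    trace_mul_vecMulVec_star M (φ k) ▸ hM.dotProduct_mulVec_nonneg (φ k)

lemma re_trace_ne_zero_of_posSemidef {M : Matrix n n ℂ} (hM : M.PosSemidef) (hM0 : M ≠ 0) :
    M.trace.re ≠ 0 := fun h => hM0 <| hM.trace_eq_zero_iff.mp <|
  Complex.ext h (Complex.le_def.mp hM.trace_nonneg).2.symm

/-- The distribution of the outcome `b` when the POVM `G y` is measured on the normalization of the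
unnormalized state `σ μ`; it is uniform when `σ μ = 0`. -/
noncomputable def bornResponse [Fintype B] (σ : Λ → Matrix n n ℂ) (G : Y → B → Matrix n n ℂ)
    (b : B) (y : Y) (μ : Λ) : ℝ :=
  if σ μ = 0 then (Fintype.card B : ℝ)⁻¹ else (G y b * σ μ).trace.re / (σ μ).trace.re

lemma isResponse_bornResponse [DecidableEq n] [Fintype B] [Nonempty B]
    {σ : Λ → Matrix n n ℂ} {G : Y → B → Matrix n n ℂ} (hσ : ∀ μ, (σ μ).PosSemidef)
    (hG : ∀ y b, (G y b).PosSemidef)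
    (hG1 : ∀ y, ∑ b, G y b = 1) :
    IsResponse (bornResponse σ G) where
  nonneg b y μ := by
    unfold bornResponse
    split_ifs
    · positivity
    · exact div_nonneg (Complex.le_def.mp (trace_mul_nonneg_of_posSemidef (hG y b) (hσ μ))).1
        (Complex.le_def.mp (hσ μ).trace_nonneg).1
  sum_eq_one y μ := by
    unfold bornResponse
    split_ifs with hμ
    · simp
    · rw [← Finset.sum_div, ← Complex.re_sum, ← trace_sum, ← Finset.sum_mul, hG1, one_mul,
        div_self (re_trace_ne_zero_of_posSemidef (hσ μ) hμ)]

lemma trace_mul_bornResponse [Fintype B] {σ : Λ → Matrix n n ℂ} {G : Y → B → Matrix n n ℂ}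
    (hσ : ∀ μ, (σ μ).PosSemidef) (hG : ∀ y b, (G y b).PosSemidef) (b : B) (y : Y) (μ : Λ) :
    (((σ μ).trace.re * bornResponse σ G b y μ : ℝ) : ℂ) = (G y b * σ μ).trace := by
  unfold bornResponse
  split_ifs with hμ
  · simp [hμ]
  · rw [mul_div_cancel₀ _ (re_trace_ne_zero_of_posSemidef (hσ μ) hμ)]
    exact Complex.ext rfl
      (Complex.le_def.mp (trace_mul_nonneg_of_posSemidef (hG y b) (hσ μ))).2

lemma isLocalCorrelation_of_localHiddenState [DecidableEq n] [Fintype A] [Fintype B] [Nonempty B]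
    [Fintype Λ] {σ : Λ → Matrix n n ℂ} {P : A → X → Λ → ℝ} {G : Y → B → Matrix n n ℂ}
    (hσ : ∀ μ, (σ μ).PosSemidef) (hσ1 : ∑ μ, (σ μ).trace = 1) (hP : IsResponse P)
    (hG : ∀ y b, (G y b).PosSemidef) (hG1 : ∀ y, ∑ b, G y b = 1) :
    IsLocalCorrelation fun a b x y => (G y b * ∑ μ, (P a x μ : ℂ) • σ μ).trace := by
  have hq1 : ∑ μ, (σ μ).trace.re = 1 := by rw [← Complex.re_sum, hσ1, Complex.one_re]
  convert IsLocalCorrelation.of_fintype (fun μ => (Complex.le_def.mp (hσ μ).trace_nonneg).1) hq1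
    hP (isResponse_bornResponse hσ hG hG1) using 5 with a b x y
  simp only [Complex.ofReal_sum, Finset.mul_sum, trace_sum, Matrix.mul_smul, trace_smul,
    smul_eq_mul, ← trace_mul_bornResponse hσ hG, Complex.ofReal_mul]
  exact Finset.sum_congr rfl fun μ _ => by ring

end LocalModel

section IsotropicLocalModel

lemma star_vec_dotProduct_kronecker_mulVec_vec {m n : Type*} [Fintype m] [Fintype n]
    (M : Matrix m m ℂ) (N : Matrix n n ℂ) (C : Matrix n m ℂ) :
    star (vec C) ⬝ᵥ (M ⊗ₖ N) *ᵥ vec C = (Cᴴ * (N * C * Mᵀ)).trace := by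
  rw [kronecker_mulVec_vec, star_vec_dotProduct_vec]

lemma maxEnt_eq_vec (d : ℕ) : maxEnt d = vec (((√d)⁻¹ : ℂ) • (1 : Matrix (Fin d) (Fin d) ℂ)) := by
  ext ⟨i, j⟩
  simp [maxEnt, vec, one_apply, eq_comm]

lemma trace_kronecker_mul_isoState {d : ℕ} (M N : Matrix (Fin d) (Fin d) ℂ) (p : ℝ) :
    (M ⊗ₖ N * isoState d p).trace
      = (p / d : ℝ) * (N * Mᵀ).trace + ((1 - p) / d ^ 2 : ℝ) * (M.trace * N.trace) := by
  rw [isoState, projME, mul_add, trace_add, Matrix.mul_smul, Matrix.mul_smul, trace_smul,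
    trace_smul, trace_mul_vecMulVec_star, mul_one, trace_kronecker, maxEnt_eq_vec,
    star_vec_dotProduct_kronecker_mulVec_vec]
  simp only [conjTranspose_smul, conjTranspose_one, Matrix.smul_mul, Matrix.mul_smul, one_mul,
    mul_one, smul_smul, trace_smul, smul_eq_mul, Complex.ofReal_div, star_inv₀, Complex.star_def,
    Complex.conj_ofReal, inv_sqrt_mul_inv_sqrt, Complex.ofReal_natCast]
  ring

lemma trace_unitary_conj {n : Type*} [Fintype n] [DecidableEq n] (U : unitaryGroup n ℂ)
    (M : Matrix n n ℂ) : ((U : Matrix n n ℂ) * M * (U : Matrix n n ℂ)ᴴ).trace = M.trace := by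
  rw [trace_mul_cycle, ← star_eq_conjTranspose, mem_unitaryGroup_iff'.mp U.2, one_mul]

variable {A X : Type*}

/-- The response that reads the outcome off from `r x` with probability `t` and replaces `r x` by a
uniformly random index otherwise. -/
noncomputable def noisyResponse {ι : Type*} [Fintype ι] (t : ℝ) (c : A → X → ι → ℝ) (a : A) (x : X)
    (r : X → ι) : ℝ :=
  t * c a x (r x) + (1 - t) * ((∑ i, c a x i) / Fintype.card ι)

lemma isResponse_noisyResponse {ι : Type*} [Fintype ι] [Nonempty ι] [Fintype A] {t : ℝ}
    (ht0 : 0 ≤ t) (ht1 : t ≤ 1) {c : A → X → ι → ℝ} (hc : IsResponse c) :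
    IsResponse (noisyResponse t c) where
  nonneg a x r := add_nonneg (mul_nonneg ht0 (hc.nonneg a x _)) <|
    mul_nonneg (sub_nonneg.mpr ht1) <|
      div_nonneg (Finset.sum_nonneg fun i _ => hc.nonneg a x i) (Nat.cast_nonneg _)
  sum_eq_one x r := by
    simp only [noisyResponse, Finset.sum_add_distrib, ← Finset.mul_sum, ← Finset.sum_div,
      hc.sum_eq_one, Finset.sum_comm (s := Finset.univ (α := A))]
    simp

lemma sum_noisyResponse_smul_secondMoment {ι : Type*} [Fintype ι] [DecidableEq ι] [Nontrivial ι]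
    [Fintype X] [DecidableEq X] {p : ℝ}
    (hp : argmaxVisibility (Fintype.card ι) = 0 → p = 0) (U : X → unitaryGroup ι ℂ)
    (c : A → X → ι → ℝ) (a : A) (x : X) :
    ∑ r, (noisyResponse (p / argmaxVisibility (Fintype.card ι)) c a x r : ℂ) •
        secondMoment (jointShare U r)
      = (p : ℂ) • ((U x : Matrix ι ι ℂ) * diagonal (fun i => (c a x i : ℂ)) *
          (U x : Matrix ι ι ℂ)ᴴ)
        + (((1 - p) / Fintype.card ι * ∑ i, c a x i : ℝ) : ℂ) • 1 := by
  have hcancel := div_mul_cancel_of_imp hp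
  simp only [noisyResponse, Complex.ofReal_add, Complex.ofReal_mul (p / _), add_smul, mul_smul,
    Finset.sum_add_distrib, ← Finset.smul_sum, sum_smul_secondMoment_jointShare,
    sum_secondMoment_jointShare, smul_add]
  simp only [smul_smul, ← Complex.ofReal_mul, add_assoc, ← add_smul, ← Complex.ofReal_add, hcancel]
  congr 4
  linear_combination (-(∑ i, c a x i) / Fintype.card ι) * hcancel

/-- Bob's hidden states are the transposes of the conditional second moments, and the noise in
Alice's response lowers the visibility from `argmaxVisibility d` to `p`. -/
lemma isLocalCorrelation_isoState_of_diagonalized {B Y : Type*} [Fintype A] [Fintype B]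
    [Nonempty B] [Finite X] {d : ℕ} (hd : 2 ≤ d) {p : ℝ} (hp0 : 0 ≤ p)
    (hp : p ≤ argmaxVisibility d) (U : X → unitaryGroup (Fin d) ℂ) {c : A → X → Fin d → ℝ}
    (hc : IsResponse c) {G : Y → B → Matrix (Fin d) (Fin d) ℂ}
    (hG : ∀ y b, (G y b).PosSemidef) (hG1 : ∀ y, ∑ b, G y b = 1) :
    IsLocalCorrelation fun a b x y =>
      (((U x : Matrix (Fin d) (Fin d) ℂ) * diagonal (fun i => (c a x i : ℂ))
        * (U x : Matrix (Fin d) (Fin d) ℂ)ᴴ) ⊗ₖ G y b * isoState d p).trace := by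
  classical
  have : Fintype X := Fintype.ofFinite X
  have : Nontrivial (Fin d) := Fin.nontrivial_iff_two_le.mpr hd
  have hd0 : (d : ℂ) ≠ 0 := mod_cast (by lia : d ≠ 0)
  let σ (r : X → Fin d) := (d : ℂ)⁻¹ • (secondMoment (jointShare U r))ᵀ
  have hσ (r : X → Fin d) : (σ r).PosSemidef :=
    (secondMoment_posSemidef (.jointShare U r)).transpose.smul (by positivity)
  have hσ1 : ∑ r, (σ r).trace = 1 := by
    simp only [σ, trace_smul, trace_transpose, smul_eq_mul, ← Finset.mul_sum, ← trace_sum,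
      sum_secondMoment_jointShare, trace_one, Fintype.card_fin, inv_mul_cancel₀ hd0]
  have hresponse := isResponse_noisyResponse (t := p / argmaxVisibility d)
    (div_nonneg hp0 (hp0.trans hp)) (div_le_one_of_le₀ hp (hp0.trans hp)) hc
  convert isLocalCorrelation_of_localHiddenState hσ hσ1 hresponse hG hG1 using 5 with a b x y
  have hmoment := sum_noisyResponse_smul_secondMoment (p := p)
    (fun h => le_antisymm (h ▸ by simpa using hp) hp0) U c a x
  have hstate : ∑ r, (noisyResponse (p / argmaxVisibility d) c a x r : ℂ) • σ r
      = (d : ℂ)⁻¹ • (∑ r, (noisyResponse (p / argmaxVisibility d) c a x r : ℂ) •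
        secondMoment (jointShare U r))ᵀ := by
    simp only [σ, smul_comm _ (d : ℂ)⁻¹, ← Finset.smul_sum, transpose_sum, transpose_smul]
  rw [Fintype.card_fin] at hmoment
  rw [hstate, hmoment, trace_kronecker_mul_isoState, trace_unitary_conj,
    trace_diagonal]
  simp only [transpose_add, transpose_smul, transpose_one, mul_add, Matrix.mul_smul, mul_one,
    smul_add, smul_smul, trace_add, trace_smul, smul_eq_mul]
  push_cast
  field_simp

/-- The operator `E^a` of the dichotomic measurement `{E, 1 - E}`. -/
def outcomeEffect {n : Type*} [DecidableEq n] (E : Matrix n n ℂ) (a : Fin 2) : Matrix n n ℂ :=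
  if a = 0 then E else 1 - E

lemma sum_outcomeEffect {n : Type*} [DecidableEq n] (E : Matrix n n ℂ) :
    ∑ a, outcomeEffect E a = 1 := by
  simp [outcomeEffect]

variable {n : Type*} [Fintype n] [DecidableEq n]

lemma IsEffect.posSemidef_outcomeEffect {E : Matrix n n ℂ} (hE : IsEffect E) (a : Fin 2) :
    (outcomeEffect E a).PosSemidef := by
  unfold outcomeEffect
  split_ifs
  exacts [hE.1, hE.2]

lemma IsEffect.exists_outcomeEffect_eq {E : Matrix n n ℂ} (hE : IsEffect E) :
    ∃ (U : unitaryGroup n ℂ) (c : Fin 2 → n → ℝ), (∀ a i, 0 ≤ c a i) ∧ (∀ i, ∑ a, c a i = 1) ∧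
      ∀ a, outcomeEffect E a
        = (U : Matrix n n ℂ) * diagonal (fun i => (c a i : ℂ)) * (U : Matrix n n ℂ)ᴴ := by
  let hH := hE.1.isHermitian
  let U : Matrix n n ℂ := hH.eigenvectorUnitary
  have hUU : U * Uᴴ = 1 := mem_unitaryGroup_iff.mp hH.eigenvectorUnitary.2
  have hUU' : Uᴴ * U = 1 := mem_unitaryGroup_iff'.mp hH.eigenvectorUnitary.2
  have hspectral : E = U * diagonal (fun i => (hH.eigenvalues i : ℂ)) * Uᴴ := hH.spectral_theorem
  let c (a : Fin 2) (i : n) : ℝ := if a = 0 then hH.eigenvalues i else 1 - hH.eigenvalues i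
  have hc (a : Fin 2) : outcomeEffect E a = U * diagonal (fun i => (c a i : ℂ)) * Uᴴ := by
    unfold outcomeEffect
    split_ifs with ha
    · simpa only [c, ha, if_true] using hspectral
    · simp only [c, ha, if_false, Complex.ofReal_sub, Complex.ofReal_one, ← diagonal_sub,
        diagonal_one, mul_sub, sub_mul, mul_one, hUU, ← hspectral]
  refine ⟨hH.eigenvectorUnitary, c, fun a i => ?_, fun i => by simp [c], hc⟩
  have hdiag := (hE.posSemidef_outcomeEffect a).conjTranspose_mul_mul_same U
  rw [hc, Matrix.mul_assoc, Matrix.mul_assoc, Matrix.mul_assoc, hUU', mul_one, ← Matrix.mul_assoc,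
    hUU', one_mul, posSemidef_diagonal_iff] at hdiag
  exact Complex.zero_le_real.mp (hdiag i)

theorem isLocalCorrelation_isoState {X Y : Type*} [Finite X] {d : ℕ} (hd : 2 ≤ d) {p : ℝ}
    (hp0 : 0 ≤ p) (hp : p ≤ argmaxVisibility d) {E : X → Matrix (Fin d) (Fin d) ℂ}
    {F : Y → Matrix (Fin d) (Fin d) ℂ} (hE : ∀ x, IsEffect (E x)) (hF : ∀ y, IsEffect (F y)) :
    IsLocalCorrelation fun a b x y =>
      (outcomeEffect (E x) a ⊗ₖ outcomeEffect (F y) b * isoState d p).trace := by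
  choose U c hc0 hc1 hUc using fun x => (hE x).exists_outcomeEffect_eq
  simp only [hUc]
  exact isLocalCorrelation_isoState_of_diagonalized hd hp0 hp U
    (c := fun a x => c x a) ⟨fun a x i => hc0 x a i, hc1⟩
    (fun y b => (hF y).posSemidef_outcomeEffect b) fun y => sum_outcomeEffect (F y)

end IsotropicLocalModel

section QubitPadding

variable {k m : ℕ}

/-- The operator `W ⊕ 1` on `ℂᵏ ⊕ ℂᵐ = ℂᵏ⁺ᵐ`. -/
def padOne (m : ℕ) (W : Matrix (Fin k) (Fin k) ℂ) : Matrix (Fin (k + m)) (Fin (k + m)) ℂ :=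
  reindex finSumFinEquiv finSumFinEquiv (fromBlocks W 0 0 1)

/-- The operator `W ⊕ 0` on `ℂᵏ ⊕ ℂᵐ = ℂᵏ⁺ᵐ`. -/
def padZero (m : ℕ) (W : Matrix (Fin k) (Fin k) ℂ) : Matrix (Fin (k + m)) (Fin (k + m)) ℂ :=
  reindex finSumFinEquiv finSumFinEquiv (fromBlocks W 0 0 0)

lemma padOne_mul_padOne (V W : Matrix (Fin k) (Fin k) ℂ) :
    padOne m V * padOne m W = padOne m (V * W) := by
  simp [padOne, fromBlocks_multiply, submatrix_mul_equiv]

lemma padZero_mul_padOne (V W : Matrix (Fin k) (Fin k) ℂ) :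
    padZero m V * padOne m W = padZero m (V * W) := by
  simp [padOne, padZero, fromBlocks_multiply, submatrix_mul_equiv]

lemma padOne_mul_padZero (V W : Matrix (Fin k) (Fin k) ℂ) :
    padOne m V * padZero m W = padZero m (V * W) := by
  simp [padOne, padZero, fromBlocks_multiply, submatrix_mul_equiv]

lemma padZero_mul_padZero (V W : Matrix (Fin k) (Fin k) ℂ) :
    padZero m V * padZero m W = padZero m (V * W) := by
  simp [padZero, fromBlocks_multiply, submatrix_mul_equiv]

lemma padOne_one : padOne m (1 : Matrix (Fin k) (Fin k) ℂ) = 1 := by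
  simp [padOne]

lemma transpose_padOne (W : Matrix (Fin k) (Fin k) ℂ) : (padOne m W)ᵀ = padOne m Wᵀ := by
  simp [padOne, fromBlocks_transpose]

lemma conjTranspose_padOne (W : Matrix (Fin k) (Fin k) ℂ) : (padOne m W)ᴴ = padOne m Wᴴ := by
  simp [padOne, fromBlocks_conjTranspose]

lemma conjTranspose_padZero (W : Matrix (Fin k) (Fin k) ℂ) : (padZero m W)ᴴ = padZero m Wᴴ := by
  simp [padZero, fromBlocks_conjTranspose]

lemma trace_padOne (W : Matrix (Fin k) (Fin k) ℂ) : (padOne m W).trace = W.trace + m := by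
  simp [padOne, trace, Fin.sum_univ_add]

lemma trace_padZero (W : Matrix (Fin k) (Fin k) ℂ) : (padZero m W).trace = W.trace := by
  simp [padZero, trace, Fin.sum_univ_add]

end QubitPadding

section TargetState

lemma phi2_eq_vec : phi2 = vec (((√2)⁻¹ : ℂ) • padZero 6 (1 : Matrix (Fin 2) (Fin 2) ℂ)) := by
  ext ⟨i, j⟩
  fin_cases i <;> fin_cases j <;> simp [phi2, vec, padZero, finSumFinEquiv, Fin.addCases]

lemma star_phi2_dotProduct_padOne_kronecker_mulVec_phi2 (V W : Matrix (Fin 2) (Fin 2) ℂ) :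
    star phi2 ⬝ᵥ (padOne 6 V ⊗ₖ padOne 6 W) *ᵥ phi2 = (W * Vᵀ).trace / 2 := by
  have hsqrt : ((√2)⁻¹ : ℂ) * (√2 : ℂ)⁻¹ = 2⁻¹ := mod_cast inv_sqrt_mul_inv_sqrt 2
  rw [phi2_eq_vec, star_vec_dotProduct_kronecker_mulVec_vec, conjTranspose_smul,
    conjTranspose_padZero, transpose_padOne, Matrix.mul_smul, Matrix.smul_mul, Matrix.smul_mul,
    Matrix.mul_smul, padOne_mul_padZero, padZero_mul_padOne, padZero_mul_padZero, trace_smul,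
    trace_smul, trace_padZero, conjTranspose_one, mul_one, one_mul, smul_smul, star_inv₀,
    Complex.star_def, Complex.conj_ofReal, hsqrt, smul_eq_mul]
  ring

lemma schmidtRank_phi2_le_two : schmidtRank phi2 ≤ 2 := by
  refine schmidtRank_le_card_of_eq_sum (s := Fin 2)
    (fun i k => if i = k.castLE (by norm_num) then ((√2)⁻¹ : ℂ) else 0)
    (fun j k => if j = k.castLE (by norm_num) then 1 else 0) fun i j => ?_
  fin_cases i <;> fin_cases j <;> simp [phi2]

lemma trace_mul_rhoTilde (M : Matrix (Fin 8 × Fin 8) (Fin 8 × Fin 8) ℂ) (l : ℝ) :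
    (M * rhoTilde l).trace =
      l * (M * isoState 8 0.24).trace + (1 - l : ℝ) * (star phi2 ⬝ᵥ M *ᵥ phi2) := by
  rw [rhoTilde, mul_add, Matrix.mul_smul, Matrix.mul_smul, trace_add, trace_smul, trace_smul,
    trace_mul_vecMulVec_star, smul_eq_mul, smul_eq_mul]

lemma trace_padOne_kronecker_padOne_mul_rhoTilde (V W : Matrix (Fin 2) (Fin 2) ℂ) (l : ℝ) :
    (padOne 6 V ⊗ₖ padOne 6 W * rhoTilde l).trace =
      l * (0.03 * ((W * Vᵀ).trace + 6) + 0.011875 * ((V.trace + 6) * (W.trace + 6))) +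
        (1 - l) * ((W * Vᵀ).trace / 2) := by
  rw [trace_mul_rhoTilde, trace_kronecker_mul_isoState, transpose_padOne, padOne_mul_padOne,
    star_phi2_dotProduct_padOne_kronecker_mulVec_phi2, trace_padOne, trace_padOne, trace_padOne]
  push_cast
  ring

lemma trace_rhoTilde (l : ℝ) : (rhoTilde l).trace = 1 := by
  have h := trace_padOne_kronecker_padOne_mul_rhoTilde 1 1 l
  rw [padOne_one, one_kronecker_one, one_mul, transpose_one, one_mul, trace_one,
    Fintype.card_fin] at h
  rw [h]
  push_cast
  ring

lemma sum_sum_isoState_diagonal (d : ℕ) (p : ℝ) :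
    ∑ i, ∑ j, isoState d p (i, i) (j, j) = ((p * d + (1 - p) / d : ℝ) : ℂ) := by
  rcases eq_or_ne d 0 with rfl | hd
  · simp
  · simp only [isoState_apply, and_self, if_true, Finset.sum_add_distrib, Finset.sum_const,
      Finset.card_univ, Fintype.card_fin, Finset.sum_ite_eq, Finset.mem_univ, nsmul_eq_mul]
    push_cast
    field_simp

lemma sum_phi2_diagonal : ∑ i, phi2 (i, i) = (√2 : ℝ) := by
  have hsqrt : (√2 : ℂ)⁻¹ + (√2 : ℂ)⁻¹ = √2 := by
    rw [← two_mul, ← div_eq_mul_inv]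
    exact_mod_cast Real.div_sqrt
  simpa [phi2, Fin.sum_univ_eight] using hsqrt

lemma sum_sum_rhoTilde_diagonal (l : ℝ) :
    ∑ i, ∑ j, rhoTilde l (i, i) (j, j) = ((2 + 0.015 * l : ℝ) : ℂ) := by
  simp only [rhoTilde, Matrix.add_apply, Matrix.smul_apply, Finset.sum_add_distrib,
    ← Finset.mul_sum, sum_sum_isoState_diagonal, sum_sum_vecMulVec_star_diagonal,
    sum_phi2_diagonal, Complex.norm_real, Real.norm_eq_abs, sq_abs, Real.sq_sqrt zero_le_two,
    smul_eq_mul]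
  push_cast
  ring

lemma not_schmidtNumberLE_two_rhoTilde {l : ℝ} (hl : 0 < l) : ¬ SchmidtNumberLE (rhoTilde l) 2 := by
  intro h
  have hfidelity := h.re_sum_diagonal_le
  rw [sum_sum_rhoTilde_diagonal, trace_rhoTilde, Complex.ofReal_re, Complex.one_re] at hfidelity
  push_cast at hfidelity
  linarith

lemma schmidtNumberLE_three_rhoTilde {l : ℝ} (hl0 : 0 ≤ l) (hl1 : l ≤ 1) :
    SchmidtNumberLE (rhoTilde l) 3 :=
  have hiso : SchmidtNumberLE (isoState 8 0.24) 3 :=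
    schmidtNumberLE_isoState (by norm_num) (by norm_num) (by norm_num) (by norm_num) (by norm_num)
  have hphi : SchmidtNumberLE (vecMulVec phi2 (star phi2)) 3 :=
    (SchmidtNumberLE.of_vecMulVec schmidtRank_phi2_le_two).mono (by norm_num)
  (hiso.smul hl0).add (hphi.smul (sub_nonneg.mpr hl1))

theorem schmidtNumber_rhoTilde {l : ℝ} (hl0 : 0 < l) (hl1 : l ≤ 1) :
    schmidtNumber (rhoTilde l) = 3 := by
  have hthree := schmidtNumberLE_three_rhoTilde hl0.le hl1
  have hleast : SchmidtNumberLE (rhoTilde l) (schmidtNumber (rhoTilde l)) :=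
    Nat.sInf_mem (s := {r | SchmidtNumberLE (rhoTilde l) r}) ⟨3, hthree⟩
  refine le_antisymm (Nat.sInf_le hthree) (Nat.lt_of_not_le fun htwo => ?_)
  exact not_schmidtNumberLE_two_rhoTilde hl0 (hleast.mono htwo)

end TargetState

section CHSH

/-- The state `ρ` violates the CHSH inequality for some choice of dichotomic observables. -/
def ViolatesCHSH {n : Type*} [Fintype n] [DecidableEq n] (ρ : Matrix (n × n) (n × n) ℂ) : Prop :=
  ∃ A₀ A₁ B₀ B₁ : Matrix n n ℂ,
    IsDichotomicObservable A₀ ∧ IsDichotomicObservable A₁ ∧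
    IsDichotomicObservable B₀ ∧ IsDichotomicObservable B₁ ∧
    (2 : ℂ) < (ρ * (A₀ ⊗ₖ B₀ + A₀ ⊗ₖ B₁ + A₁ ⊗ₖ B₀ - A₁ ⊗ₖ B₁)).trace

lemma isDichotomicObservable_of_mul_self_eq_one {n : Type*} [Fintype n] [DecidableEq n]
    {A : Matrix n n ℂ} (hA : Aᴴ = A) (hA1 : A * A = 1) : IsDichotomicObservable A := by
  have hsub : 1 - A = (2⁻¹ : ℂ) • ((1 - A)ᴴ * (1 - A)) := by
    simp only [conjTranspose_sub, conjTranspose_one, hA, sub_mul, mul_sub, hA1, mul_one, one_mul]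
    module
  have hadd : 1 + A = (2⁻¹ : ℂ) • ((1 + A)ᴴ * (1 + A)) := by
    simp only [conjTranspose_add, conjTranspose_one, hA, add_mul, mul_add, hA1, mul_one, one_mul]
    module
  have hhalf : (0 : ℂ) ≤ 2⁻¹ := by positivity
  refine ⟨hA, ?_, ?_⟩
  · rw [hsub]
    exact (posSemidef_conjTranspose_mul_self _).smul hhalf
  · rw [hadd]
    exact (posSemidef_conjTranspose_mul_self _).smul hhalf

/-- The qubit observable `a Z + b X`, with `Z` and `X` the Pauli matrices. -/
def realPauli (a b : ℝ) : Matrix (Fin 2) (Fin 2) ℂ := !![(a : ℂ), b; b, -a]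

lemma trace_realPauli (a b : ℝ) : (realPauli a b).trace = 0 := by
  simp [realPauli, trace_fin_two]

lemma transpose_realPauli (a b : ℝ) : (realPauli a b)ᵀ = realPauli a b := by
  ext i j
  fin_cases i <;> fin_cases j <;> rfl

lemma conjTranspose_realPauli (a b : ℝ) : (realPauli a b)ᴴ = realPauli a b := by
  ext i j
  fin_cases i <;> fin_cases j <;> simp [realPauli]

lemma trace_realPauli_mul_realPauli (a b a' b' : ℝ) :
    (realPauli a b * realPauli a' b').trace = ((2 * (a * a' + b * b') : ℝ) : ℂ) := by
  simp only [realPauli, mul_fin_two, trace_fin_two_of]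
  push_cast
  ring

lemma realPauli_mul_self {a b : ℝ} (hab : a ^ 2 + b ^ 2 = 1) :
    realPauli a b * realPauli a b = 1 := by
  have hab' : (a : ℂ) * a + b * b = 1 := by
    rw [← sq, ← sq]
    exact_mod_cast hab
  simp [realPauli, one_fin_two, hab', add_comm ((b : ℂ) * b), mul_comm (b : ℂ) a]

lemma isDichotomicObservable_padOne_realPauli (m : ℕ) {a b : ℝ} (hab : a ^ 2 + b ^ 2 = 1) :
    IsDichotomicObservable (padOne m (realPauli a b)) :=
  isDichotomicObservable_of_mul_self_eq_one
    (by rw [conjTranspose_padOne, conjTranspose_realPauli])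
    (by rw [padOne_mul_padOne, realPauli_mul_self hab, padOne_one])

lemma trace_padOne_realPauli_kronecker_mul_rhoTilde (l a b a' b' : ℝ) :
    (padOne 6 (realPauli a b) ⊗ₖ padOne 6 (realPauli a' b') * rhoTilde l).trace =
      ((l * (0.6075 + 0.06 * (a * a' + b * b')) + (1 - l) * (a * a' + b * b') : ℝ) : ℂ) := by
  rw [trace_padOne_kronecker_padOne_mul_rhoTilde, transpose_realPauli,
    trace_realPauli_mul_realPauli, trace_realPauli, trace_realPauli]
  push_cast
  ring

-- With the settings below the CHSH value is `2.8 - 1.417 l`, which exceeds `2` iff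
-- `l < 800 / 1417`.
theorem violatesCHSH_rhoTilde {l : ℝ} (hl : l < 800 / 1417) : ViolatesCHSH (rhoTilde l) := by
  refine ⟨padOne 6 (realPauli 1 0), padOne 6 (realPauli 0 1), padOne 6 (realPauli (3 / 5) (4 / 5)),
    padOne 6 (realPauli (3 / 5) (-(4 / 5))),
    isDichotomicObservable_padOne_realPauli 6 (by norm_num),
    isDichotomicObservable_padOne_realPauli 6 (by norm_num),
    isDichotomicObservable_padOne_realPauli 6 (by norm_num),
    isDichotomicObservable_padOne_realPauli 6 (by norm_num), ?_⟩
  rw [trace_mul_comm, sub_mul, add_mul, add_mul, trace_sub, trace_add, trace_add,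
    trace_padOne_realPauli_kronecker_mul_rhoTilde, trace_padOne_realPauli_kronecker_mul_rhoTilde,
    trace_padOne_realPauli_kronecker_mul_rhoTilde, trace_padOne_realPauli_kronecker_mul_rhoTilde]
  simp only [← Complex.ofReal_add, ← Complex.ofReal_sub]
  rw [← Complex.ofReal_ofNat, Complex.real_lt_real]
  linarith

end CHSH

section Simulation

/-- The correlations of `ρ` in every Bell scenario with dichotomic measurements are the mixture,
with weights `l` and `1 - l`, of local correlations and the correlations of the pure state `φ`. -/
def IsDichotomicallyLocalMixture {n : Type*} [Fintype n] [DecidableEq n] (l : ℝ) (φ : n × n → ℂ)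
    (ρ : Matrix (n × n) (n × n) ℂ) : Prop :=
  ∀ (X Y : Type) [Fintype X] [Fintype Y] (E : X → Matrix n n ℂ) (F : Y → Matrix n n ℂ),
    (∀ x, IsEffect (E x)) → (∀ y, IsEffect (F y)) →
    ∃ (nΛ : ℕ) (q : Fin nΛ → ℝ) (P : Fin 2 → X → Fin nΛ → ℝ) (Q : Fin 2 → Y → Fin nΛ → ℝ),
      (∀ μ, 0 ≤ q μ) ∧ (∑ μ, q μ = 1) ∧
      (∀ a x μ, 0 ≤ P a x μ) ∧ (∀ x μ, ∑ a, P a x μ = 1) ∧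
      (∀ b y μ, 0 ≤ Q b y μ) ∧ (∀ y μ, ∑ b, Q b y μ = 1) ∧
      ∀ a b x y, (outcomeEffect (E x) a ⊗ₖ outcomeEffect (F y) b * ρ).trace =
        ((l * ∑ μ, q μ * P a x μ * Q b y μ : ℝ) : ℂ) +
          ((1 - l : ℝ) : ℂ) * (star φ ⬝ᵥ (outcomeEffect (E x) a ⊗ₖ outcomeEffect (F y) b) *ᵥ φ)

lemma le_argmaxVisibility_eight : 0.24 ≤ argmaxVisibility 8 := by
  norm_num [argmaxVisibility, harmonic, Finset.sum_range_succ]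

theorem isDichotomicallyLocalMixture_rhoTilde (l : ℝ) :
    IsDichotomicallyLocalMixture l phi2 (rhoTilde l) := by
  intro X Y _ _ E F hE hF
  obtain ⟨nΛ, q, P, Q, hq, hq1, hP, hP1, hQ, hQ1, hPQ⟩ :=
    isLocalCorrelation_isoState (by norm_num) (by norm_num) le_argmaxVisibility_eight hE hF
  refine ⟨nΛ, q, P, Q, hq, hq1, hP, hP1, hQ, hQ1, fun a b x y => ?_⟩
  rw [trace_mul_rhoTilde, Complex.ofReal_mul, ← hPQ]

end Simulation

theorem nonlocal_state_schmidt_number_not_certifiable_two_output_povm_general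
    {l : ℝ} (hl0 : 0 < l) (hl1 : l < 800 / 1417) :
    schmidtNumber (rhoTilde l) = 3 ∧ ViolatesCHSH (rhoTilde l) ∧
      IsDichotomicallyLocalMixture l phi2 (rhoTilde l) :=
  ⟨schmidtNumber_rhoTilde hl0 (by linarith), violatesCHSH_rhoTilde hl1,
    isDichotomicallyLocalMixture_rhoTilde l⟩

/-- Corollary 1: for `0 < λ < 0.312`, the state `ρ̃(λ)` has Schmidt number 3
and is Bell-nonlocal, yet its correlations in any two-output Bell scenario with arbitrary
dichotomic POVMs can be simulated using shared randomness together with the Schmidt-rank-2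
state `|φ₂⁺⟩`. -/
theorem nonlocal_state_schmidt_number_not_certifiable_two_output_povm
    (l : ℝ) (hl0 : 0 < l) (hl1 : l < 0.312) :
    schmidtNumber (rhoTilde l) = 3 ∧
    (∃ A₀ A₁ B₀ B₁ : Matrix (Fin 8) (Fin 8) ℂ,
      IsDichotomicObservable A₀ ∧ IsDichotomicObservable A₁ ∧
      IsDichotomicObservable B₀ ∧ IsDichotomicObservable B₁ ∧
      (2 : ℂ) < Matrix.trace
        (rhoTilde l * (A₀ ⊗ₖ B₀ + A₀ ⊗ₖ B₁ + A₁ ⊗ₖ B₀ - A₁ ⊗ₖ B₁))) ∧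
    (∀ (X Y : Type) [Fintype X] [Fintype Y]
      (E : X → Matrix (Fin 8) (Fin 8) ℂ) (F : Y → Matrix (Fin 8) (Fin 8) ℂ),
      (∀ x, IsEffect (E x)) → (∀ y, IsEffect (F y)) →
      ∃ (nΛ : ℕ) (q : Fin nΛ → ℝ) (P : Fin 2 → X → Fin nΛ → ℝ)
        (Q : Fin 2 → Y → Fin nΛ → ℝ),
        (∀ μ, 0 ≤ q μ) ∧ (∑ μ, q μ = 1) ∧
        (∀ a x μ, 0 ≤ P a x μ) ∧ (∀ x μ, ∑ a, P a x μ = 1) ∧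
        (∀ b y μ, 0 ≤ Q b y μ) ∧ (∀ y μ, ∑ b, Q b y μ = 1) ∧
        (∀ (a b : Fin 2) x y,
          Matrix.trace
            (((if a = 0 then E x else 1 - E x) ⊗ₖ (if b = 0 then F y else 1 - F y)) *
              rhoTilde l) =
            ((l * ∑ μ, q μ * P a x μ * Q b y μ : ℝ) : ℂ) +
            ((1 - l : ℝ) : ℂ) *
              (star phi2 ⬝ᵥ
                (((if a = 0 then E x else 1 - E x) ⊗ₖ (if b = 0 then F y else 1 - F y)) *ᵥ
                  phi2)))) :=
  nonlocal_state_schmidt_number_not_certifiable_two_output_povm_general hl0 (by linarith)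
end

section
/- For every real λ with 0 ≤ λ < 0.312, there exist Hermitian operators A₀, A₁, B₀, B₁ on ℂ⁸, each of the form P − Q with P, Q orthogonal projections satisfying PQ = 0, such that Tr[ρ̃(λ)(A₀⊗B₀ + A₀⊗B₁ + A₁⊗B₀ − A₁⊗B₁)] > 2; that is, ρ̃(λ) violates the CHSH Bell inequality under local projective measurements for λ ∈ [0, 0.312). -/
open Matrix
open scoped Kronecker ComplexOrder

/-!
Alice and Bob measure Householder reflections `1 - 2|v⟩⟨v|`, with `v` a real unit vector in the
plane spanned by `e₀` and `e₁`. On the vector `|s|^{-1/2} ∑_{i ∈ s} e_{(i,i)}`, the correlation of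
the reflections in `v` and `w`, both supported in `s`, is `1 - (4 / |s|) (1 - |v ⬝ᵥ w|²)`. Taking
`|s| = 2` and `|s| = 8` evaluates both entangled components of `ρ̃(λ)`, and the white noise
contributes through the traces `8 - 2 = 6`. At the optimal angles `0, π/4` and `±π/8` the part on
the plane reaches Tsirelson's `2√2`, while the identity on the other six coordinates adds the
deterministic CHSH value `2` with weight `0.6075 λ`. The total `1.215 λ + (1 - 0.94 λ) 2√2` exceeds
`2` for `λ` up to about `0.5738`.
-/

open scoped Real

lemma sum_mul_eq_dotProduct_of_support_subset {n R : Type*} [Fintype n]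
    [NonUnitalNonAssocSemiring R] {s : Finset n} (u : n → R) {v : n → R}
    (hvs : Function.support v ⊆ s) :
    ∑ i ∈ s, u i * v i = u ⬝ᵥ v := by
  refine Finset.sum_subset s.subset_univ fun i _ hi => ?_
  rw [Function.notMem_support.mp fun hi' => hi (hvs hi'), mul_zero]

lemma isStarProjection_vecMulVec_star {n R : Type*} [Fintype n] [Semiring R] [StarRing R]
    {v : n → R} (hv : star v ⬝ᵥ v = 1) :
    IsStarProjection (vecMulVec v (star v)) where
  isIdempotentElem := by simp [IsIdempotentElem, vecMulVec_mul_vecMulVec, hv]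
  isSelfAdjoint := by simp [IsSelfAdjoint, star_eq_conjTranspose, conjTranspose_vecMulVec]

section Householder

variable {n : Type*} [DecidableEq n]

/-- The Householder reflection `1 - 2|v⟩⟨v|`: for a unit vector `v`, the `±1`-valued observable
whose outcome `-1` is the projection onto `v`. -/
noncomputable def householder (v : n → ℂ) : Matrix n n ℂ :=
  1 - (2 : ℂ) • vecMulVec v (star v)

lemma householder_hadamard_householder (v w : n → ℂ) :
    householder v ⊙ householder w =
      1 - (2 : ℂ) • diagonal (star v * v) - (2 : ℂ) • diagonal (star w * w) +
        (4 : ℂ) • vecMulVec (v * w) (star (v * w)) := by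
  ext i j
  simp only [householder, hadamard_apply, Matrix.sub_apply, Matrix.add_apply, Matrix.smul_apply,
    vecMulVec_apply, Pi.star_apply, Pi.mul_apply, star_mul', smul_eq_mul]
  obtain rfl | hij := eq_or_ne i j
  · rw [one_apply_eq, diagonal_apply_eq, diagonal_apply_eq, Pi.mul_apply, Pi.mul_apply,
      Pi.star_apply, Pi.star_apply]
    ring
  · rw [one_apply_ne hij, diagonal_apply_ne _ hij, diagonal_apply_ne _ hij]
    ring

variable [Fintype n]

lemma exists_orthogonal_projections_sub_eq_householder {v : n → ℂ} (hv : star v ⬝ᵥ v = 1) :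
    ∃ P Q : Matrix n n ℂ,
      Pᴴ = P ∧ P * P = P ∧ Qᴴ = Q ∧ Q * Q = Q ∧ P * Q = 0 ∧ householder v = P - Q := by
  have hQ := isStarProjection_vecMulVec_star hv
  refine ⟨1 - vecMulVec v (star v), vecMulVec v (star v), hQ.one_sub.isSelfAdjoint,
    hQ.one_sub.isIdempotentElem, hQ.isSelfAdjoint, hQ.isIdempotentElem, hQ.one_sub_mul_self, ?_⟩
  rw [householder]
  module

lemma trace_householder {v : n → ℂ} (hv : star v ⬝ᵥ v = 1) :
    (householder v).trace = Fintype.card n - 2 := by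
  simp [householder, trace_sub, trace_smul, trace_vecMulVec, dotProduct_comm v, hv]

end Householder

section MaxEntOn

variable {n : Type*} [DecidableEq n]

/-- The vector `|s|^{-1/2} ∑_{i ∈ s} e_{(i,i)}`, maximally entangled on the coordinates in `s`;
it is the common form of `maxEnt` and `phi2`. -/
noncomputable def maxEntOn (s : Finset n) : n × n → ℂ :=
  vec (diagonal fun i => if i ∈ s then ((1 / √(s.card) : ℝ) : ℂ) else 0)

lemma maxEnt_eq_maxEntOn_univ (d : ℕ) : maxEnt d = maxEntOn Finset.univ := by
  ext ⟨i, j⟩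
  obtain rfl | hij := eq_or_ne i j
  · simp [maxEnt, maxEntOn]
  · simp [maxEnt, maxEntOn, hij, hij.symm]

lemma phi2_eq_maxEntOn_pair : phi2 = maxEntOn {0, 1} := by
  ext ⟨i, j⟩
  obtain rfl | hij := eq_or_ne i j
  · simp [phi2, maxEntOn]
  · have hne : ¬((i = 0 ∧ j = 0) ∨ (i = 1 ∧ j = 1)) := by grind
    simp [phi2, maxEntOn, hij.symm, hne]

variable [Fintype n]

lemma trace_vecMulVec_maxEntOn_mul_kronecker (s : Finset n) (A B : Matrix n n ℂ) :
    (vecMulVec (maxEntOn s) (star (maxEntOn s)) * (A ⊗ₖ B)).trace =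
      (s.card : ℂ)⁻¹ * ∑ i ∈ s, ∑ j ∈ s, (A ⊙ B) i j := by
  have hsqrt : ((√s.card : ℝ) : ℂ)⁻¹ * ((√s.card : ℝ) : ℂ)⁻¹ = (s.card : ℂ)⁻¹ := by
    rw [← mul_inv, ← Complex.ofReal_mul, Real.mul_self_sqrt s.card.cast_nonneg,
      Complex.ofReal_natCast]
  rw [vecMulVec_mul, trace_vecMulVec, dotProduct_comm, ← dotProduct_mulVec, maxEntOn,
    ← star_dotProduct_hadamard_mulVec_eq_kronecker]
  simp only [dotProduct, mulVec, Pi.star_apply, apply_ite star, star_zero, ite_mul, mul_ite,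
    zero_mul, mul_zero, Finset.sum_ite_mem, Finset.univ_inter]
  simp only [← hsqrt, Finset.mul_sum]
  refine Finset.sum_congr rfl fun _ _ => Finset.sum_congr rfl fun _ _ => ?_
  rw [RCLike.star_def, Complex.conj_ofReal, one_div, Complex.ofReal_inv]
  ring

lemma sum_householder_hadamard_householder {s : Finset n} {v w : n → ℂ}
    (hv : star v ⬝ᵥ v = 1) (hw : star w ⬝ᵥ w = 1)
    (hvs : Function.support v ⊆ s) (hws : Function.support w ⊆ s) :
    ∑ i ∈ s, ∑ j ∈ s, (householder v ⊙ householder w) i j =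
      s.card - 4 * (1 - Complex.normSq (v ⬝ᵥ w)) := by
  have sum_normSq_v := (sum_mul_eq_dotProduct_of_support_subset (star v) hvs).trans hv
  have sum_normSq_w := (sum_mul_eq_dotProduct_of_support_subset (star w) hws).trans hw
  have sum_vw := sum_mul_eq_dotProduct_of_support_subset v hws
  have sum_star_vw : ∑ i ∈ s, star (v i * w i) = star (v ⬝ᵥ w) := by rw [← star_sum, sum_vw]
  calc
    _ = ∑ _i ∈ s, (1 : ℂ) - 2 * ∑ i ∈ s, star v i * v i - 2 * ∑ i ∈ s, star w i * w i +
          4 * ((∑ i ∈ s, v i * w i) * ∑ i ∈ s, star (v i * w i)) := by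
      simp_rw [householder_hadamard_householder, Finset.sum_mul_sum, Finset.mul_sum,
        ← Finset.sum_sub_distrib, ← Finset.sum_add_distrib]
      refine Finset.sum_congr rfl fun i hi => ?_
      simp [vecMulVec_apply, one_apply, diagonal_apply, Finset.sum_add_distrib,
        Finset.sum_sub_distrib, hi]
    _ = s.card - 4 * (1 - Complex.normSq (v ⬝ᵥ w)) := by
      rw [sum_normSq_v, sum_normSq_w, sum_vw, sum_star_vw, ← starRingEnd_apply, Complex.mul_conj,
        Finset.sum_const, nsmul_one]
      ring

lemma trace_vecMulVec_maxEntOn_mul_householder_kronecker {s : Finset n} {v w : n → ℂ}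
    (hv : star v ⬝ᵥ v = 1) (hw : star w ⬝ᵥ w = 1)
    (hvs : Function.support v ⊆ s) (hws : Function.support w ⊆ s) :
    (vecMulVec (maxEntOn s) (star (maxEntOn s)) * (householder v ⊗ₖ householder w)).trace =
      1 - 4 / s.card * (1 - Complex.normSq (v ⬝ᵥ w)) := by
  have card_ne_zero : (s.card : ℂ) ≠ 0 := by
    rw [Nat.cast_ne_zero, Finset.card_ne_zero, Finset.nonempty_iff_ne_empty]
    rintro rfl
    simpa [hv] using sum_mul_eq_dotProduct_of_support_subset (star v) hvs
  rw [trace_vecMulVec_maxEntOn_mul_kronecker,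
    sum_householder_hadamard_householder hv hw hvs hws]
  field_simp

lemma trace_isoState_mul_householder_kronecker {d : ℕ} (p : ℝ) {v w : Fin d → ℂ}
    (hv : star v ⬝ᵥ v = 1) (hw : star w ⬝ᵥ w = 1) :
    (isoState d p * (householder v ⊗ₖ householder w)).trace =
      p * (1 - 4 / d * (1 - Complex.normSq (v ⬝ᵥ w))) + (1 - p) * ((d - 2) / d) ^ 2 := by
  have trace_projME := trace_vecMulVec_maxEntOn_mul_householder_kronecker hv hw
    (s := Finset.univ) (by simp) (by simp)
  rw [← maxEnt_eq_maxEntOn_univ, ← projME, Finset.card_univ, Fintype.card_fin] at trace_projME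
  simp only [isoState, add_mul, smul_mul_assoc, one_mul, trace_add, trace_smul, smul_eq_mul,
    trace_projME, trace_kronecker, trace_householder hv, trace_householder hw, Fintype.card_fin]
  push_cast
  ring

end MaxEntOn

section PlaneVec

variable {n : Type*} [DecidableEq n]

/-- The vector at angle `θ` in the coordinate plane spanned by `e_i` and `e_j`, with real
coordinates; the measurement settings are reflections in such vectors. -/
noncomputable def planeVec (i j : n) (θ : ℝ) : n → ℂ :=
  Pi.single i (Real.cos θ : ℂ) + Pi.single j (Real.sin θ : ℂ)

lemma star_planeVec (i j : n) (θ : ℝ) : star (planeVec i j θ) = planeVec i j θ := by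
  simp only [planeVec, star_add, Pi.star_single, RCLike.star_def, Complex.conj_ofReal]

lemma support_planeVec_subset (i j : n) (θ : ℝ) :
    Function.support (planeVec i j θ) ⊆ ({i, j} : Finset n) := by
  intro k hk
  contrapose! hk
  simp_all [planeVec]

variable [Fintype n]

lemma planeVec_dotProduct_planeVec {i j : n} (hij : i ≠ j) (α β : ℝ) :
    planeVec i j α ⬝ᵥ planeVec i j β = Real.cos (α - β) := by
  simp [planeVec, hij, hij.symm, Real.cos_sub]

lemma star_planeVec_dotProduct_self {i j : n} (hij : i ≠ j) (θ : ℝ) :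
    star (planeVec i j θ) ⬝ᵥ planeVec i j θ = 1 := by
  simp [star_planeVec, planeVec_dotProduct_planeVec hij]

end PlaneVec

lemma trace_rhoTilde_mul_householder_planeVec_kronecker (l α β : ℝ) :
    (rhoTilde l * (householder (planeVec 0 1 α) ⊗ₖ householder (planeVec 0 1 β))).trace =
      ((0.6075 * l + (1 - 0.94 * l) * Real.cos (2 * (α - β)) : ℝ) : ℂ) := by
  have unit (θ : ℝ) : star (planeVec (0 : Fin 8) 1 θ) ⬝ᵥ planeVec 0 1 θ = 1 :=
    star_planeVec_dotProduct_self zero_ne_one θ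
  rw [rhoTilde, add_mul, smul_mul_assoc, smul_mul_assoc, trace_add, trace_smul, trace_smul,
    trace_isoState_mul_householder_kronecker _ (unit α) (unit β), phi2_eq_maxEntOn_pair,
    trace_vecMulVec_maxEntOn_mul_householder_kronecker (unit α) (unit β)
      (support_planeVec_subset 0 1 α) (support_planeVec_subset 0 1 β),
    planeVec_dotProduct_planeVec zero_ne_one, Complex.normSq_ofReal,
    Finset.card_pair zero_ne_one, Real.cos_two_mul]
  simp only [smul_eq_mul]
  push_cast
  ring

lemma trace_rhoTilde_mul_CHSH (l : ℝ) :
    let H (θ : ℝ) : Matrix (Fin 8) (Fin 8) ℂ := householder (planeVec 0 1 θ)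
    (rhoTilde l * (H 0 ⊗ₖ H (π / 8) + H 0 ⊗ₖ H (-(π / 8)) + H (π / 4) ⊗ₖ H (π / 8) -
      H (π / 4) ⊗ₖ H (-(π / 8)))).trace =
      ((1.215 * l + (1 - 0.94 * l) * (2 * √2) : ℝ) : ℂ) := by
  have cos₀₀ : Real.cos (2 * (0 - π / 8)) = √2 / 2 := by
    rw [← Real.cos_pi_div_four, ← Real.cos_neg]
    ring_nf
  have cos₀₁ : Real.cos (2 * (0 - -(π / 8))) = √2 / 2 := by
    rw [← Real.cos_pi_div_four]
    ring_nf
  have cos₁₀ : Real.cos (2 * (π / 4 - π / 8)) = √2 / 2 := by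
    rw [← Real.cos_pi_div_four]
    ring_nf
  have cos₁₁ : Real.cos (2 * (π / 4 - -(π / 8))) = -(√2 / 2) := by
    rw [← Real.cos_pi_div_four, ← Real.cos_pi_sub]
    ring_nf
  simp only [Matrix.mul_add, Matrix.mul_sub, trace_add, trace_sub,
    trace_rhoTilde_mul_householder_planeVec_kronecker, cos₀₀, cos₀₁, cos₁₀, cos₁₁]
  push_cast
  ring

theorem rhoTilde_violates_CHSH_general (l : ℝ)
    (hl : l < (2 * √2 - 2) / (1.88 * √2 - 1.215)) :
    ∃ A₀ A₁ B₀ B₁ : Matrix (Fin 8) (Fin 8) ℂ,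
      (∃ P Q : Matrix (Fin 8) (Fin 8) ℂ,
        Pᴴ = P ∧ P * P = P ∧ Qᴴ = Q ∧ Q * Q = Q ∧ P * Q = 0 ∧ A₀ = P - Q) ∧
      (∃ P Q : Matrix (Fin 8) (Fin 8) ℂ,
        Pᴴ = P ∧ P * P = P ∧ Qᴴ = Q ∧ Q * Q = Q ∧ P * Q = 0 ∧ A₁ = P - Q) ∧
      (∃ P Q : Matrix (Fin 8) (Fin 8) ℂ,
        Pᴴ = P ∧ P * P = P ∧ Qᴴ = Q ∧ Q * Q = Q ∧ P * Q = 0 ∧ B₀ = P - Q) ∧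
      (∃ P Q : Matrix (Fin 8) (Fin 8) ℂ,
        Pᴴ = P ∧ P * P = P ∧ Qᴴ = Q ∧ Q * Q = Q ∧ P * Q = 0 ∧ B₁ = P - Q) ∧
      (2 : ℂ) < Matrix.trace
        (rhoTilde l * (A₀ ⊗ₖ B₀ + A₀ ⊗ₖ B₁ + A₁ ⊗ₖ B₀ - A₁ ⊗ₖ B₁)) := by
  have observable (θ : ℝ) := exists_orthogonal_projections_sub_eq_householder
    (star_planeVec_dotProduct_self (zero_ne_one (α := Fin 8)) θ)
  refine ⟨_, _, _, _, observable 0, observable (π / 4), observable (π / 8),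
    observable (-(π / 8)), ?_⟩
  have chsh_gt_two : 2 < 1.215 * l + (1 - 0.94 * l) * (2 * √2) := by
    have denom_pos : 0 < 1.88 * √2 - 1.215 := by linarith [Real.one_lt_sqrt_two]
    rw [lt_div_iff₀ denom_pos] at hl
    linarith
  rw [trace_rhoTilde_mul_CHSH]
  exact_mod_cast chsh_gt_two

/-- Lemma 2: for `0 ≤ λ < 0.312`, the state `ρ̃(λ)` violates the CHSH
inequality under local projective measurements: there are ±1-valued observables
`A₀, A₁, B₀, B₁`, each a difference `P − Q` of orthogonal projections with `PQ = 0`,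
whose CHSH value on `ρ̃(λ)` exceeds 2. -/
theorem rhoTilde_violates_CHSH (l : ℝ) (hl0 : 0 ≤ l) (hl1 : l < 0.312) :
    ∃ A₀ A₁ B₀ B₁ : Matrix (Fin 8) (Fin 8) ℂ,
      (∃ P Q : Matrix (Fin 8) (Fin 8) ℂ,
        Pᴴ = P ∧ P * P = P ∧ Qᴴ = Q ∧ Q * Q = Q ∧ P * Q = 0 ∧ A₀ = P - Q) ∧
      (∃ P Q : Matrix (Fin 8) (Fin 8) ℂ,
        Pᴴ = P ∧ P * P = P ∧ Qᴴ = Q ∧ Q * Q = Q ∧ P * Q = 0 ∧ A₁ = P - Q) ∧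
      (∃ P Q : Matrix (Fin 8) (Fin 8) ℂ,
        Pᴴ = P ∧ P * P = P ∧ Qᴴ = Q ∧ Q * Q = Q ∧ P * Q = 0 ∧ B₀ = P - Q) ∧
      (∃ P Q : Matrix (Fin 8) (Fin 8) ℂ,
        Pᴴ = P ∧ P * P = P ∧ Qᴴ = Q ∧ Q * Q = Q ∧ P * Q = 0 ∧ B₁ = P - Q) ∧
      (2 : ℂ) < Matrix.trace
        (rhoTilde l * (A₀ ⊗ₖ B₀ + A₀ ⊗ₖ B₁ + A₁ ⊗ₖ B₀ - A₁ ⊗ₖ B₁)) := by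
  refine rhoTilde_violates_CHSH_general l (hl1.trans ?_)
  rw [lt_div_iff₀] <;> linarith [Real.lt_sqrt_of_sq_lt (show (1.4 : ℝ) ^ 2 < 2 by norm_num)]
end
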